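/- arXiv:1104.3090 — 2 statements merged into one kernel-verified Lean document; each statement's English description precedes it below -/
import Mathlib

section
/- Let G be a connected simple graph on n ≥ 2 vertices with maximum degree at most 3 such that for every vertex v the subgraph induced on the remaining vertices is connected, and let s,t be vertices of G. Then G has a walk from s to t that visits every vertex of G and has length at most 4n/3 − 2/3 + dist_G(s,t)/3, where dist_G(s,t) is the graph distance between s and t in G. -/
open SimpleGraph

/-!
Let `T` be a depth-first search tree rooted at `s` and `P` a shortest path from `s` to `t`. Choose a
set `J` of edges whose complement has odd degree exactly at the ends of `P`; deleting or doubling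
the edges of `J` then gives a multigraph with the degree parities of a walk from `s` to `t`. It is
enough for connectivity to double a tree edge of `J` when all back edges arriving at its upper end
are deleted, because degree at most three forces a vertex with incoming back edges to have a single
child.

The number of edges kept below a vertex is at most an affine function of `J`, and at the fractional
point `(1 + P) / 3` these bounds add up to `(4 * n - 2 + dist s t) / 3`. Since `G` has no bridge,
every cut meeting all admissible `J` in an odd number of edges has weight at least `1` in
`(1 + P) / 3`, so this point lies in the convex hull of the admissible `J`, and some admissible `J`
does at least as well.
-/

namespace SpanningWalk

lemma zmodTwo_cases : ∀ x : ZMod 2, x = 0 ∨ x = 1 := by decide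

lemma zmodTwo_eq_one : ∀ {x : ZMod 2}, x ≠ 0 → x = 1 := by decide

lemma natCast_one_add_val {E : Type*} (J : E → ZMod 2) :
    (fun e => ((1 + (J e).val : ℕ) : ZMod 2)) = 1 + J := by
  funext e
  rw [Nat.cast_add, Nat.cast_one, ZMod.natCast_zmod_val, Pi.add_apply, Pi.one_apply]

lemma sum_one_add {ι : Type*} (s : Finset ι) (y : ι → ℕ) :
    ∑ i ∈ s, (1 + y i) = s.card + ∑ i ∈ s, y i := by
  rw [Finset.sum_add_distrib, Finset.card_eq_sum_ones]

lemma sum_indicator_mul {ι : Type*} [Fintype ι] [DecidableEq ι] (s : Finset ι) (c : ℤ)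
    (y : ι → ℕ) : ∑ i, (if i ∈ s then c else 0) * (y i : ℤ) = c * (∑ i ∈ s, y i : ℕ) := by
  simp only [ite_mul, zero_mul, Finset.sum_ite_mem, Finset.univ_inter, Nat.cast_sum,
    Finset.mul_sum]

/-! ### Cuts, joins and components -/

section Cuts

variable {V E : Type*} [DecidableEq V]

/-- The indicator of the set of edges with exactly one end in `S`. -/
def cut (p q : E → V) (S : Finset V) (e : E) : ℕ := if (p e ∈ S ↔ q e ∈ S) then 0 else 1

variable {p q : E → V} {S : Finset V} {e : E}

lemma natCast_cut {u v : V} (he : s(p e, q e) = s(u, v)) :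
    (cut p q S e : ZMod 2) = (if u ∈ S then 1 else 0) + (if v ∈ S then 1 else 0) := by
  have hpq : (cut p q S e : ZMod 2) =
      (if p e ∈ S then 1 else 0) + (if q e ∈ S then 1 else 0) := by
    by_cases hp : p e ∈ S <;> by_cases hq : q e ∈ S <;> simp [cut, hp, hq, ZModModule.add_self]
  obtain ⟨hp, hq⟩ | ⟨hp, hq⟩ := Sym2.eq_iff.1 he
  · rw [hpq, hp, hq]
  · rw [hpq, hp, hq, add_comm]

lemma cut_eq_one_of_ends {u v : V} (he : s(p e, q e) = s(u, v)) (hu : u ∈ S) (hv : v ∉ S) :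
    cut p q S e = 1 := by
  obtain ⟨hp, hq⟩ | ⟨hp, hq⟩ := Sym2.eq_iff.1 he <;> simp [cut, hp, hq, hu, hv]

lemma exists_ends_of_cut_ne_zero (he : cut p q S e ≠ 0) :
    ∃ i ∈ S, ∃ o ∉ S, s(p e, q e) = s(i, o) := by
  have hpq : ¬(p e ∈ S ↔ q e ∈ S) := by simpa [cut] using he
  by_cases hp : p e ∈ S
  · exact ⟨p e, hp, q e, fun hq => hpq (iff_of_true hp hq), rfl⟩
  · exact ⟨q e, by tauto, p e, hp, Sym2.eq_swap⟩

end Cuts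

section Chains

variable {V E : Type*} [Fintype E]

/-- The total weight of the edges in the support of a mod-2 chain. -/
def weight (w : E → ℕ) (J : E → ZMod 2) : ℕ := ∑ e, w e * (J e).val

lemma weight_zero (w : E → ℕ) : weight w 0 = 0 := by
  simp only [weight, Pi.zero_apply, ZMod.val_zero, mul_zero, Finset.sum_const_zero]

lemma weight_add_of_null {w : E → ℕ} (J : E → ZMod 2) {Z : E → ZMod 2}
    (hZ : ∀ e, Z e ≠ 0 → w e = 0) : weight w (J + Z) = weight w J := by
  refine Finset.sum_congr rfl fun e _ => ?_
  by_cases h : Z e = 0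
  · rw [Pi.add_apply, h, add_zero]
  · rw [hZ e h, zero_mul, zero_mul]

lemma weight_single [DecidableEq E] (w : E → ℕ) (e : E) : weight w (Pi.single e 1) = w e := by
  rw [weight, Finset.sum_eq_single e (fun f _ hf => by rw [Pi.single_eq_of_ne hf]; simp) (by simp)]
  simp [ZMod.val_one]

lemma weight_add_of_disjoint (w : E → ℕ) {J K : E → ZMod 2} (h : ∀ e, J e = 0 ∨ K e = 0) :
    weight w (J + K) = weight w J + weight w K := by
  rw [weight, weight, weight, ← Finset.sum_add_distrib]
  refine Finset.sum_congr rfl fun e _ => ?_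
  rcases h e with h | h <;> simp [h]

lemma weight_add_single [DecidableEq E] (w : E → ℕ) {J : E → ZMod 2} {e : E} (he : J e = 1) :
    weight w (J + Pi.single e 1) + w e = weight w J := by
  have hdisjoint : ∀ f, (J + Pi.single e 1 : E → ZMod 2) f = 0 ∨
      (Pi.single e 1 : E → ZMod 2) f = 0 := by
    intro f
    rcases eq_or_ne f e with rfl | hf
    · left; rw [Pi.add_apply, he, Pi.single_eq_same]; exact ZModModule.add_self 1
    · exact .inr (Pi.single_eq_of_ne hf 1)
  rw [← weight_single w e, ← weight_add_of_disjoint w hdisjoint, add_assoc, ZModModule.add_self,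
    add_zero]

lemma weight_exchange {w : E → ℕ} {Q K C : E → ZMod 2}
    (hC : ∀ e, w e ≠ 0 → C e ≠ 0 → (Q + K) e ≠ 0) :
    weight w (Q + C) + weight w (K + C) = weight w Q + weight w K := by
  have hval : ∀ x y z : ZMod 2, (z ≠ 0 → x + y ≠ 0) →
      (x + z).val + (y + z).val = x.val + y.val := by decide
  simp only [weight, ← Finset.sum_add_distrib, ← mul_add]
  refine Finset.sum_congr rfl fun e _ => ?_
  by_cases hw : w e = 0
  · simp only [hw, zero_mul]
  · exact congrArg (w e * ·) (hval (Q e) (K e) (C e) (hC e hw))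

lemma exists_ne_zero_of_weight_ne_zero {w : E → ℕ} {J : E → ZMod 2} (h : weight w J ≠ 0) :
    ∃ e, w e ≠ 0 ∧ J e = 1 := by
  obtain ⟨e, -, he⟩ := Finset.exists_ne_zero_of_sum_ne_zero h
  refine ⟨e, left_ne_zero_of_mul he, zmodTwo_eq_one fun h0 => ?_⟩
  simp [h0] at he

lemma exists_ne_of_weight_ne {w : E → ℕ} {J : E → ZMod 2} {e : E} (he : J e = 1)
    (h : weight w J ≠ w e) : ∃ f ≠ e, w f ≠ 0 ∧ J f = 1 := by
  classical
  obtain ⟨f, hwf, hf⟩ := exists_ne_zero_of_weight_ne_zero (w := w) (J := J + Pi.single e 1) <| by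
    have := weight_add_single w he
    omega
  have hfe : f ≠ e := by
    rintro rfl
    rw [Pi.add_apply, he, Pi.single_eq_same, ZModModule.add_self] at hf
    exact zero_ne_one hf
  exact ⟨f, hfe, hwf, by rwa [Pi.add_apply, Pi.single_eq_of_ne hfe, add_zero] at hf⟩

variable [DecidableEq V] (p q : E → V)

/-- The boundary of a mod-2 chain in the multigraph whose edge `e` has ends `p e` and `q e`,
that is, the set of its odd-degree vertices. A `T`-join is a chain with boundary `T`. -/
def boundary : (E → ZMod 2) →ₗ[ZMod 2] (V → ZMod 2) :=
  Fintype.linearCombination (ZMod 2) fun e => Pi.single (p e) 1 + Pi.single (q e) 1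

lemma boundary_single [DecidableEq E] (e : E) :
    boundary p q (Pi.single e 1) = Pi.single (p e) 1 + Pi.single (q e) 1 := by
  rw [boundary, Fintype.linearCombination_apply_single, one_smul]

lemma boundary_apply (J : E → ZMod 2) (v : V) :
    boundary p q J v = ∑ e with p e = v, J e + ∑ e with q e = v, J e := by
  simp only [boundary, Fintype.linearCombination_apply, Finset.sum_apply, Pi.smul_apply,
    Pi.add_apply, smul_eq_mul, mul_add, Finset.sum_add_distrib, Pi.single_apply, mul_ite, mul_one,
    mul_zero, Finset.sum_filter, eq_comm (a := v)]

lemma sum_mul_boundary (S : Finset V) (c : V → ZMod 2) (J : E → ZMod 2) :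
    ∑ v ∈ S, c v * boundary p q J v =
      ∑ e, J e * ((if p e ∈ S then c (p e) else 0) + (if q e ∈ S then c (q e) else 0)) := by
  have hfiber (g : E → V) : ∑ v ∈ S, c v * ∑ e with g e = v, J e =
      ∑ e, J e * (if g e ∈ S then c (g e) else 0) := by
    simp only [Finset.mul_sum, Finset.sum_filter]
    rw [Finset.sum_comm]
    refine Finset.sum_congr rfl fun e _ => ?_
    simp only [mul_ite, mul_zero, Finset.sum_ite_eq, mul_comm]
  simp only [boundary_apply, mul_add, Finset.sum_add_distrib, hfiber]

lemma natCast_weight [Fintype V] {w : E → ℕ} {c : V → ZMod 2}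
    (hw : ∀ e, (w e : ZMod 2) = c (p e) + c (q e)) (J : E → ZMod 2) :
    (weight w J : ZMod 2) = ∑ v, c v * boundary p q J v := by
  simp only [sum_mul_boundary, Finset.mem_univ, if_true, weight, Nat.cast_sum, Nat.cast_mul,
    ZMod.natCast_val, ZMod.cast_id', id, hw, mul_comm]

variable {p q}

lemma boundary_single_of_ends [DecidableEq E] {e : E} {u v : V} (he : s(p e, q e) = s(u, v)) :
    boundary p q (Pi.single e 1) = Pi.single u 1 + Pi.single v 1 := by
  rw [boundary_single]
  obtain ⟨hp, hq⟩ | ⟨hp, hq⟩ := Sym2.eq_iff.1 he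
  · rw [hp, hq]
  · rw [hp, hq, add_comm]

lemma natCast_weight_cut (S : Finset V) (J : E → ZMod 2) :
    (weight (cut p q S) J : ZMod 2) = ∑ v ∈ S, boundary p q J v := by
  have hsum := sum_mul_boundary p q S 1 J
  simp only [Pi.one_apply, one_mul] at hsum
  simp only [hsum, weight, Nat.cast_sum, Nat.cast_mul, ZMod.natCast_val, ZMod.cast_id', id,
    natCast_cut rfl, mul_comm]

end Chains

section Linked

variable {V E : Type*} [Fintype E] [DecidableEq V] (p q : E → V) (F : Set E)

/-- Two vertices are linked by `F` if they are equal or lie in the same component of the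
multigraph with edge set `F`: some chain supported in `F` has exactly these two as boundary. -/
def Linked (u v : V) : Prop :=
  ∃ Z : E → ZMod 2, (∀ e, Z e ≠ 0 → e ∈ F) ∧ boundary p q Z = Pi.single u 1 + Pi.single v 1

variable {p q F}

lemma Linked.refl (v : V) : Linked p q F v v :=
  ⟨0, by simp, by rw [map_zero, ZModModule.add_self]⟩

lemma Linked.symm {u v : V} (h : Linked p q F u v) : Linked p q F v u := by
  obtain ⟨Z, hZF, hZ⟩ := h
  exact ⟨Z, hZF, by rw [hZ, add_comm]⟩

lemma Linked.trans {u v x : V} (huv : Linked p q F u v) (hvx : Linked p q F v x) :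
    Linked p q F u x := by
  obtain ⟨Z, hZF, hZ⟩ := huv
  obtain ⟨Z', hZF', hZ'⟩ := hvx
  refine ⟨Z + Z', fun e he => ?_, by rw [map_add, hZ, hZ', ZModModule.add_add_add_cancel]⟩
  by_cases hZe : Z e = 0
  · exact hZF' e (by simpa [hZe] using he)
  · exact hZF e hZe

lemma linked_of_mem {e : E} {u v : V} (he : e ∈ F) (huv : s(p e, q e) = s(u, v)) :
    Linked p q F u v := by
  classical
  refine ⟨Pi.single e 1, fun f hf => ?_, boundary_single_of_ends huv⟩
  rwa [of_not_not fun hfe => hf (Pi.single_eq_of_ne hfe 1)]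

lemma Linked.mem_iff {S : Finset V} {u v : V} (h : Linked p q F u v)
    (hF : ∀ e ∈ F, cut p q S e = 0) : u ∈ S ↔ v ∈ S := by
  obtain ⟨Z, hZF, hZ⟩ := h
  have hsum : ∑ x ∈ S, boundary p q Z x = 0 := by
    rw [← natCast_weight_cut, weight, Finset.sum_eq_zero, Nat.cast_zero]
    intro e _
    rcases eq_or_ne (Z e) 0 with he | he
    · rw [he, ZMod.val_zero, mul_zero]
    · rw [hF e (hZF e he), zero_mul]
  rw [hZ] at hsum
  by_cases hu : u ∈ S <;> by_cases hv : v ∈ S <;>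
    simp_all [Finset.sum_add_distrib]

end Linked

section TwoCutEdges

variable {V E : Type*} [Fintype E] [DecidableEq V] (p q : E → V) (S : Finset V)

/-- The edges of the chain `Y` that avoid `S`. -/
def avoiding (Y : E → ZMod 2) : Set E := {e | Y e ≠ 0 ∧ ∀ v ∈ s(p e, q e), v ∉ S}

variable {p q S}

omit [Fintype E] in
lemma cut_eq_zero_of_mem_avoiding {Y : E → ZMod 2} {e : E} (he : e ∈ avoiding p q S Y) :
    cut p q S e = 0 := by
  simp [cut, he.2 (p e) (Sym2.mem_mk_left _ _), he.2 (q e) (Sym2.mem_mk_right _ _)]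

variable [Finite V]

lemma exists_cut_edge_linked {a i o : V} {Y : E → ZMod 2} {e : E}
    (hY : ∀ v ∉ S, v ≠ a → boundary p q Y v = 0) (heY : Y e = 1) (hi : i ∈ S) (ho : o ∉ S)
    (he : s(p e, q e) = s(i, o)) (hoa : ¬Linked p q (avoiding p q S Y) o a) :
    ∃ f ≠ e, Y f = 1 ∧ ∃ i' ∈ S, ∃ o' ∉ S, s(p f, q f) = s(i', o') ∧
      Linked p q (avoiding p q S Y) o o' := by
  classical
  have := Fintype.ofFinite V
  set K : Finset V := {v | Linked p q (avoiding p q S Y) o v}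
  have hKS : ∀ v ∈ K, v ∉ S := fun v hv =>
    mt ((Finset.mem_filter.1 hv).2.mem_iff fun _ => cut_eq_zero_of_mem_avoiding).2 ho
  have hoK : o ∈ K := Finset.mem_filter.2 ⟨Finset.mem_univ _, .refl o⟩
  have heven : (weight (cut p q K) Y : ZMod 2) = 0 := by
    rw [natCast_weight_cut]
    refine Finset.sum_eq_zero fun v hv => hY v (hKS v hv) ?_
    rintro rfl
    exact hoa (Finset.mem_filter.1 hv).2
  have heK : cut p q K e = 1 :=
    cut_eq_one_of_ends (he.trans Sym2.eq_swap) hoK fun hiK => hKS i hiK hi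
  obtain ⟨f, hfe, hfK, hf⟩ := exists_ne_of_weight_ne (w := cut p q K) heY fun h1 => by
    rw [h1, heK, Nat.cast_one] at heven
    exact one_ne_zero heven
  obtain ⟨o', ho', i', hi', hends⟩ := exists_ends_of_cut_ne_zero hfK
  have hlinked := (Finset.mem_filter.1 ho').2
  refine ⟨f, hfe, hf, i', ?_, o', hKS o' ho', hends.trans Sym2.eq_swap, hlinked⟩
  by_contra hi'S
  refine hi' (Finset.mem_filter.2 ⟨Finset.mem_univ _, hlinked.trans (linked_of_mem ?_ hends)⟩)
  refine ⟨by simp [hf], fun v hv => ?_⟩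
  rw [hends, Sym2.mem_iff] at hv
  rcases hv with rfl | rfl
  exacts [hKS _ ho', hi'S]

lemma exists_two_linked_cut_edges {a : V} {Y : E → ZMod 2}
    (hY : ∀ v ∉ S, v ≠ a → boundary p q Y v = 0) (hcut : 2 ≤ weight (cut p q S) Y) :
    ∃ e f, e ≠ f ∧ Y e = 1 ∧ Y f = 1 ∧ ∃ i ∈ S, ∃ o ∉ S, ∃ i' ∈ S, ∃ o' ∉ S,
      s(p e, q e) = s(i, o) ∧ s(p f, q f) = s(i', o') ∧
      Linked p q (avoiding p q S Y) o o' := by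
  obtain ⟨e, heS, heY⟩ := exists_ne_zero_of_weight_ne_zero (w := cut p q S) (J := Y) (by omega)
  obtain ⟨i, hi, o, ho, he⟩ := exists_ends_of_cut_ne_zero heS
  obtain ⟨f, hfe, hfS, hf⟩ := exists_ne_of_weight_ne (w := cut p q S) heY <| by
    rw [cut_eq_one_of_ends he hi ho]
    omega
  obtain ⟨i', hi', o', ho', hf'⟩ := exists_ends_of_cut_ne_zero hfS
  by_cases hoa : Linked p q (avoiding p q S Y) o a
  · by_cases hoa' : Linked p q (avoiding p q S Y) o' a
    · exact ⟨e, f, hfe.symm, heY, hf, i, hi, o, ho, i', hi', o', ho', he, hf',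
        hoa.trans hoa'.symm⟩
    · obtain ⟨g, hgf, hg, j, hj, x, hx, hg', hlinked⟩ :=
        exists_cut_edge_linked hY hf hi' ho' hf' hoa'
      exact ⟨f, g, hgf.symm, hf, hg, i', hi', o', ho', j, hj, x, hx, hf', hg', hlinked⟩
  · obtain ⟨g, hge, hg, j, hj, x, hx, hg', hlinked⟩ := exists_cut_edge_linked hY heY hi ho he hoa
    exact ⟨e, g, hge.symm, heY, hg, i, hi, o, ho, j, hj, x, hx, he, hg', hlinked⟩

lemma exists_subchain_of_two_le_weight_cut {a : V} {Y : E → ZMod 2}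
    (hY : ∀ v ∉ S, v ≠ a → boundary p q Y v = 0) (hcut : 2 ≤ weight (cut p q S) Y) :
    ∃ C : E → ZMod 2, (∀ e, C e ≠ 0 → Y e ≠ 0) ∧ weight (cut p q S) C = 2 ∧
      ∃ i ∈ S, ∃ j ∈ S, boundary p q C = Pi.single i 1 + Pi.single j 1 := by
  classical
  obtain ⟨e, f, hef, heY, hfY, i, hi, o, ho, j, hj, o', ho', he, hf, Z, hZF, hZ⟩ :=
    exists_two_linked_cut_edges hY hcut
  refine ⟨Pi.single e 1 + Pi.single f 1 + Z, fun g hg hgY => hg ?_, ?_, i, hi, j, hj, ?_⟩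
  · have hge : g ≠ e := by rintro rfl; simp [heY] at hgY
    have hgf : g ≠ f := by rintro rfl; simp [hfY] at hgY
    simpa [hge, hgf] using of_not_not fun hgZ => (hZF g hgZ).1 hgY
  · rw [weight_add_of_null _ fun g hg => cut_eq_zero_of_mem_avoiding (hZF g hg),
      weight_add_of_disjoint, weight_single, weight_single, cut_eq_one_of_ends he hi ho,
      cut_eq_one_of_ends hf hj ho']
    intro g
    rcases eq_or_ne g e with rfl | hge
    · exact .inr (Pi.single_eq_of_ne hef 1)
    · exact .inl (Pi.single_eq_of_ne hge 1)
  · rw [map_add, map_add, hZ, boundary_single_of_ends he, boundary_single_of_ends hf]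
    calc Pi.single i 1 + Pi.single o 1 + (Pi.single j 1 + Pi.single o' 1) +
          (Pi.single o 1 + Pi.single o' 1)
        = Pi.single i (1 : ZMod 2) + Pi.single j 1 + ((Pi.single o 1 + Pi.single o' 1) +
          (Pi.single o 1 + Pi.single o' 1)) := by abel
      _ = Pi.single i 1 + Pi.single j 1 := by rw [ZModModule.add_self, add_zero]

end TwoCutEdges

/-! ### Packing cuts against a minimum join -/

section NearJoins

variable {V E : Type*} [Fintype E] [Fintype V] [DecidableEq V] (p q : E → V) (w : E → ℕ)

/-- `Q` is a chain of minimal weight among those whose boundary can be corrected to `T` at two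
(possibly equal) vertices; it needs the correction at `a` and `b`. -/
structure IsMinNearJoin (T : V → ZMod 2) (a b : V) (Q : E → ZMod 2) : Prop where
  boundary_eq : boundary p q Q = T + Pi.single a 1 + Pi.single b 1
  weight_le : ∀ a' b' Q', boundary p q Q' = T + Pi.single a' 1 + Pi.single b' 1 →
    weight w Q ≤ weight w Q'

open scoped Classical in
/-- The vertices that can be reached from `b` through edges of weight zero. -/
noncomputable def nullComponent (b : V) : Finset V := {v | Linked p q {e | w e = 0} b v}

variable {p q w}

lemma mem_nullComponent {b v : V} :
    v ∈ nullComponent p q w b ↔ Linked p q {e | w e = 0} b v := by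
  simp [nullComponent]

lemma self_mem_nullComponent (b : V) : b ∈ nullComponent p q w b :=
  mem_nullComponent.2 (.refl b)

lemma cut_nullComponent_le (b : V) (e : E) : cut p q (nullComponent p q w b) e ≤ w e := by
  by_cases he : cut p q (nullComponent p q w b) e = 0
  · exact he ▸ Nat.zero_le _
  · obtain ⟨i, hi, o, ho, hends⟩ := exists_ends_of_cut_ne_zero he
    rw [cut_eq_one_of_ends hends hi ho, Nat.one_le_iff_ne_zero]
    exact fun hw => ho (mem_nullComponent.2 ((mem_nullComponent.1 hi).trans
      (linked_of_mem hw hends)))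

lemma weight_ne_zero_of_cut_ne_zero {b : V} {e : E}
    (he : cut p q (nullComponent p q w b) e ≠ 0) : w e ≠ 0 :=
  fun hw => he (Nat.le_zero.1 (hw ▸ cut_nullComponent_le b e))

omit [Fintype V] in
lemma exists_isMinNearJoin [Nonempty V] {J : E → ZMod 2} :
    ∃ a b Q, IsMinNearJoin p q w (boundary p q J) a b Q := by
  obtain ⟨v⟩ := ‹Nonempty V›
  obtain ⟨Q, ⟨a, b, hQ⟩, hmin⟩ := exists_minimalFor_of_wellFoundedLT
    (fun Q => ∃ a b, boundary p q Q = boundary p q J + Pi.single a 1 + Pi.single b 1) (weight w)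
    ⟨J, v, v, by rw [add_assoc, ZModModule.add_self, add_zero]⟩
  refine ⟨a, b, Q, hQ, fun a' b' Q' hQ' => ?_⟩
  rcases le_total (weight w Q) (weight w Q') with h | h
  exacts [h, hmin ⟨a', b', hQ'⟩ h]

namespace IsMinNearJoin

variable {T : V → ZMod 2} {a b : V} {Q : E → ZMod 2}

lemma notMem_nullComponent (hQ : IsMinNearJoin p q w T a b Q)
    (hT : ∀ K, boundary p q K = T → weight w K ≠ 0) : a ∉ nullComponent p q w b := by
  classical
  intro ha
  obtain ⟨Z, hZnull, hZ⟩ := mem_nullComponent.1 ha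
  have hjoin : boundary p q (Q + Z) = T := by
    rw [map_add, hQ.boundary_eq, hZ, add_assoc T, add_comm (Pi.single b 1), add_assoc T,
      ZModModule.add_self, add_zero]
  obtain ⟨e, hwe, he⟩ := exists_ne_zero_of_weight_ne_zero (hT _ hjoin)
  have hle := hQ.weight_le (p e) (q e) (Q + Z + Pi.single e 1) <| by
    rw [map_add, hjoin, boundary_single, add_assoc]
  have hdrop := weight_add_single w he
  rw [weight_add_of_null Q hZnull] at hdrop
  omega

lemma weight_add_le_of_cut (hQ : IsMinNearJoin p q w T a b Q) {Q' : E → ZMod 2} {e : E}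
    (hQ' : boundary p q Q' = boundary p q Q) (he : Q' e = 1)
    (hcut : cut p q (nullComponent p q w b) e ≠ 0) : weight w Q + w e ≤ weight w Q' := by
  classical
  obtain ⟨i, hi, o, -, hends⟩ := exists_ends_of_cut_ne_zero hcut
  obtain ⟨Z, hZnull, hZ⟩ := mem_nullComponent.1 hi
  have hle := hQ.weight_le a o (Q' + Pi.single e 1 + Z) <| by
    rw [map_add, map_add, hQ', hQ.boundary_eq, hZ, boundary_single_of_ends hends]
    calc T + Pi.single a 1 + Pi.single b 1 + (Pi.single i 1 + Pi.single o 1) +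
          (Pi.single b 1 + Pi.single i 1)
        = T + Pi.single a (1 : ZMod 2) + Pi.single o 1 +
          ((Pi.single b 1 + Pi.single i 1) + (Pi.single b 1 + Pi.single i 1)) := by abel
      _ = T + Pi.single a 1 + Pi.single o 1 := by rw [ZModModule.add_self, add_zero]
  rw [weight_add_of_null _ hZnull] at hle
  have hdrop := weight_add_single w he
  omega

lemma eq_zero_of_cut (hQ : IsMinNearJoin p q w T a b Q) {e : E}
    (hcut : cut p q (nullComponent p q w b) e ≠ 0) : Q e = 0 := by
  by_contra he
  have hle := hQ.weight_add_le_of_cut rfl (zmodTwo_eq_one he) hcut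
  have hwe := weight_ne_zero_of_cut_ne_zero hcut
  omega

lemma weight_cut_add (hQ : IsMinNearJoin p q w T a b Q) (K : E → ZMod 2) :
    weight (cut p q (nullComponent p q w b)) (Q + K) =
      weight (cut p q (nullComponent p q w b)) K := by
  rw [add_comm]
  exact weight_add_of_null K fun e he => by_contra fun hcut => he (hQ.eq_zero_of_cut hcut)

lemma weight_cut_eq_zero (hQ : IsMinNearJoin p q w T a b Q) :
    weight (cut p q (nullComponent p q w b)) Q = 0 := by
  rw [← add_zero Q, hQ.weight_cut_add, weight_zero]

lemma sum_nullComponent (hQ : IsMinNearJoin p q w T a b Q) (ha : a ∉ nullComponent p q w b) :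
    ∑ v ∈ nullComponent p q w b, T v = 1 := by
  have hb := self_mem_nullComponent (p := p) (q := q) (w := w) b
  have hsum := natCast_weight_cut (p := p) (q := q) (nullComponent p q w b) Q
  rw [hQ.weight_cut_eq_zero, Nat.cast_zero, hQ.boundary_eq] at hsum
  simp only [Pi.add_apply, Finset.sum_add_distrib, Finset.sum_pi_single', ha, hb, if_true,
    if_false, add_zero] at hsum
  exact CharTwo.add_eq_zero.1 hsum.symm

lemma exists_exchange_cycle (hQ : IsMinNearJoin p q w T a b Q) {K : E → ZMod 2}
    (hK : boundary p q K = T) (hcut : 2 ≤ weight (cut p q (nullComponent p q w b)) K) :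
    ∃ C, boundary p q C = 0 ∧ weight (cut p q (nullComponent p q w b)) C = 2 ∧
      ∀ e, w e ≠ 0 → C e ≠ 0 → (Q + K) e ≠ 0 := by
  have hsum : ∀ v ∉ nullComponent p q w b, v ≠ a → boundary p q (Q + K) v = 0 := by
    intro v hv hva
    have hvb : v ≠ b := by rintro rfl; exact hv (self_mem_nullComponent v)
    rw [map_add, hQ.boundary_eq, hK]
    simp [hva, hvb, ZModModule.add_self]
  obtain ⟨C, hC, hC2, i, hi, j, hj, hCij⟩ :=
    exists_subchain_of_two_le_weight_cut hsum (by rwa [hQ.weight_cut_add])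
  obtain ⟨Z, hZnull, hZ⟩ := (mem_nullComponent.1 hi).symm.trans (mem_nullComponent.1 hj)
  refine ⟨C + Z, by rw [map_add, hCij, hZ, ZModModule.add_self], ?_, fun e hwe he => hC e ?_⟩
  · rw [weight_add_of_null, hC2]
    exact fun e he => by_contra fun h => weight_ne_zero_of_cut_ne_zero h (hZnull e he)
  · have hZe : Z e = 0 := by_contra fun h => hwe (hZnull e h)
    rwa [Pi.add_apply, hZe, add_zero] at he

variable {c : V → ZMod 2}

lemma exists_lighter_join (hQ : IsMinNearJoin p q w T a b Q)
    (hw : ∀ e, (w e : ZMod 2) = c (p e) + c (q e)) {K : E → ZMod 2} (hK : boundary p q K = T)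
    (hcut : 2 ≤ weight (cut p q (nullComponent p q w b)) K) :
    ∃ K', boundary p q K' = T ∧ weight w K' + 2 ≤ weight w K ∧
      weight (cut p q (nullComponent p q w b)) K' + 2 =
        weight (cut p q (nullComponent p q w b)) K := by
  obtain ⟨C, hC, hC2, hsub⟩ := hQ.exists_exchange_cycle hK hcut
  have hQC : boundary p q (Q + C) = boundary p q Q := by rw [map_add, hC, add_zero]
  refine ⟨K + C, by rw [map_add, hC, hK, add_zero], ?_, ?_⟩
  · have hheavier : weight w Q + 1 ≤ weight w (Q + C) := by
      obtain ⟨e, he, hCe⟩ := exists_ne_zero_of_weight_ne_zero (hC2.trans_ne two_ne_zero)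
      have hle := hQ.weight_add_le_of_cut hQC (by simp [hQ.eq_zero_of_cut he, hCe]) he
      have hwe := weight_ne_zero_of_cut_ne_zero he
      omega
    have hparity : weight w (Q + C) % 2 = weight w Q % 2 := by
      rw [← Nat.ModEq, ← ZMod.natCast_eq_natCast_iff, natCast_weight p q hw,
        natCast_weight p q hw, hQC]
    have hexchange := weight_exchange hsub
    omega
  · have hexchange := weight_exchange (w := cut p q (nullComponent p q w b)) fun e he =>
      hsub e (weight_ne_zero_of_cut_ne_zero he)
    rw [hQ.weight_cut_add, hQ.weight_cut_eq_zero, hC2] at hexchange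
    omega

lemma add_weight_cut_le (hQ : IsMinNearJoin p q w T a b Q)
    (hw : ∀ e, (w e : ZMod 2) = c (p e) + c (q e)) {n : ℕ}
    (hn : ∀ K, boundary p q K = T → n ≤ weight w K) (K : E → ZMod 2) (hK : boundary p q K = T) :
    n + weight (cut p q (nullComponent p q w b)) K ≤ weight w K + 1 := by
  induction hm : weight w K using Nat.strong_induction_on generalizing K with
  | _ m ih =>
    by_cases hcut : weight (cut p q (nullComponent p q w b)) K ≤ 1
    · have := hn K hK
      omega
    · obtain ⟨K', hK', hlight, hcut'⟩ := hQ.exists_lighter_join hw hK (by omega)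
      have := ih (weight w K') (by omega) K' hK' rfl
      omega

end IsMinNearJoin

end NearJoins

section Packing

variable {V E : Type*} [Fintype E] [Finite V] [DecidableEq V] {p q : E → V}

/-- One unit of weight at a time is peeled off along a `T`-odd cut: the null component of a minimal
near join is a cut whose removal lowers the weight of every `T`-join by at most the drop of the
minimum. -/
theorem mul_le_sum_of_le_cut {J : E → ZMod 2} {k : ℕ} {x : E → ℕ}
    (hx : ∀ S : Finset V, ∑ v ∈ S, boundary p q J v = 1 → k ≤ ∑ e, cut p q S e * x e) (n : ℕ)
    {w : E → ℕ} {c : V → ZMod 2} (hw : ∀ e, (w e : ZMod 2) = c (p e) + c (q e))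
    (hn : ∀ K, boundary p q K = boundary p q J → n ≤ weight w K) :
    k * n ≤ ∑ e, w e * x e := by
  have := Fintype.ofFinite V
  induction n generalizing w c with
  | zero => exact Nat.zero_le _
  | succ n ih =>
    have hJ : weight w J ≠ 0 := (Nat.succ_pos n).trans_le (hn J rfl) |>.ne'
    obtain ⟨e₀, -⟩ := exists_ne_zero_of_weight_ne_zero hJ
    have : Nonempty V := ⟨p e₀⟩
    obtain ⟨a, b, Q, hQ⟩ := exists_isMinNearJoin (p := p) (q := q) (w := w) (J := J)
    have ha := hQ.notMem_nullComponent fun K hK => (Nat.succ_pos n).trans_le (hn K hK) |>.ne'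
    have hodd := hQ.sum_nullComponent ha
    have hpeel := hQ.add_weight_cut_le hw hn
    have hle := cut_nullComponent_le (p := p) (q := q) (w := w) b
    generalize nullComponent p q w b = S at hodd hpeel hle
    have hdrop := ih (w := fun e => w e - cut p q S e)
      (c := fun v => c v + if v ∈ S then 1 else 0)
      (fun e => by
        rw [Nat.cast_sub (hle e), natCast_cut rfl, hw, ZModModule.sub_eq_add]
        abel)
      (fun K hK => by
        have hsplit : weight (fun e => w e - cut p q S e) K + weight (cut p q S) K =
            weight w K := by
          simp only [weight, ← Finset.sum_add_distrib, ← add_mul, Nat.sub_add_cancel (hle _)]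
        have := hpeel K hK
        omega)
    have hsplit : ∑ e, (w e - cut p q S e) * x e + ∑ e, cut p q S e * x e = ∑ e, w e * x e := by
      simp only [← Finset.sum_add_distrib, ← add_mul, Nat.sub_add_cancel (hle _)]
    have hcut := hx S hodd
    rw [mul_add_one]
    omega

end Packing

/-! ### Joins in bridgeless multigraphs -/

section Bridgeless

variable {V E : Type*} [Fintype E] [DecidableEq V] {p q : E → V} {x : E → ℕ}

lemma three_le_sum_cut (hx : ∀ e, x e = 1 ∨ x e = 2) {S : Finset V} (hS : ∑ e, cut p q S e ≠ 1)
    (hodd : ∑ v ∈ S, boundary p q (fun e => (x e : ZMod 2)) v = 1) :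
    3 ≤ ∑ e, cut p q S e * x e := by
  have hparity : Odd (∑ e, cut p q S e * x e) := by
    rw [← ZMod.natCast_eq_one_iff_odd, ← hodd, ← natCast_weight_cut, weight]
    simp only [Nat.cast_sum, Nat.cast_mul, ZMod.natCast_val, ZMod.cast_natCast']
  have hle : ∑ e, cut p q S e ≤ ∑ e, cut p q S e * x e :=
    Finset.sum_le_sum fun e _ => Nat.le_mul_of_pos_right _ (by rcases hx e with h | h <;> omega)
  have hnonempty : ∑ e, cut p q S e ≠ 0 := by
    intro h0
    have hzero : ∀ e, cut p q S e = 0 := by simpa using h0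
    simp [hzero] at hparity
  obtain ⟨m, hm⟩ := hparity
  omega

lemma exists_join_three_mul_weight_le [Finite V] (hx : ∀ e, x e = 1 ∨ x e = 2)
    (hbridge : ∀ S : Finset V, ∑ e, cut p q S e ≠ 1) (w : E → ℕ) :
    ∃ J, boundary p q J = boundary p q (fun e => (x e : ZMod 2)) ∧
      3 * weight w J ≤ ∑ e, w e * x e := by
  obtain ⟨J, hJ, hmin⟩ := exists_minimalFor_of_wellFoundedLT
    (fun J => boundary p q J = boundary p q fun e => (x e : ZMod 2)) (weight w) ⟨_, rfl⟩
  have hdouble (K : E → ZMod 2) : weight (fun e => 2 * w e) K = 2 * weight w K := by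
    simp only [weight, Finset.mul_sum, mul_assoc]
  have hle := mul_le_sum_of_le_cut (fun S hS => three_le_sum_cut hx (hbridge S) hS)
    (2 * weight w J) (w := fun e => 2 * w e) (c := 0)
    (fun e => by simp [CharTwo.two_eq_zero])
    (fun K hK => by
      rw [hdouble]
      rcases le_total (weight w J) (weight w K) with h | h
      exacts [Nat.mul_le_mul_left 2 h, Nat.mul_le_mul_left 2 (hmin hK h)])
  simp only [mul_assoc, ← Finset.mul_sum] at hle
  exact ⟨J, hJ, by omega⟩

/-- On the edges of negative weight, `J` is replaced by its complement and `x` by `3 - x`. -/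
theorem exists_join_three_mul_sum_le [Finite V] (hx : ∀ e, x e = 1 ∨ x e = 2)
    (hbridge : ∀ S : Finset V, ∑ e, cut p q S e ≠ 1) (W : E → ℤ) :
    ∃ J, boundary p q J = boundary p q (fun e => (x e : ZMod 2)) ∧
      3 * ∑ e, W e * (J e).val ≤ ∑ e, W e * x e := by
  set flip : E → ZMod 2 := fun e => if W e < 0 then 1 else 0 with hflip
  set y : E → ℕ := fun e => if W e < 0 then 3 - x e else x e with hy
  have hyx : (fun e => (y e : ZMod 2)) = (fun e => (x e : ZMod 2)) + flip := by
    funext e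
    by_cases hW : W e < 0 <;> rcases hx e with h | h <;>
      simp only [hy, hflip, hW, h, if_true, if_false, Pi.add_apply] <;> decide
  obtain ⟨J, hJ, hle⟩ := exists_join_three_mul_weight_le (x := y)
    (fun e => by by_cases hW : W e < 0 <;> rcases hx e with h | h <;> simp [hy, hW, h])
    hbridge (fun e => (W e).natAbs)
  refine ⟨J + flip, by rw [map_add, hJ, hyx, map_add, add_assoc, ZModModule.add_self, add_zero], ?_⟩
  have hterm (e : E) : W e * x e - 3 * (W e * ((J + flip) e).val) =
      (W e).natAbs * y e - 3 * ((W e).natAbs * (J e).val) := by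
    by_cases hW : W e < 0
    · have hval : (((J + flip) e).val : ℤ) = 1 - (J e).val := by
        rcases zmodTwo_cases (J e) with h | h
        · simp [hflip, hW, h, ZMod.val_one]
        · simp [hflip, hW, h, ZMod.val_one, ZModModule.add_self]
      have hyval : (y e : ℤ) = 3 - x e := by
        rcases hx e with h | h <;> simp [hy, hW, h]
      rw [hval, hyval, Int.ofNat_natAbs_of_nonpos hW.le]
      ring
    · simp [hflip, hy, hW, abs_of_nonneg (not_lt.1 hW)]
  have hsum := Finset.sum_congr rfl fun e (_ : e ∈ Finset.univ) => hterm e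
  simp only [Finset.sum_sub_distrib, ← Finset.mul_sum] at hsum
  have hle' : 3 * ∑ e, ((W e).natAbs : ℤ) * (J e).val ≤ ∑ e, ((W e).natAbs : ℤ) * y e := by
    exact_mod_cast hle
  linarith

end Bridgeless

lemma exists_forall_le_of_le {ι : Type*} {P : ι → Prop} {f : ι → ℕ} {B : ℕ} (hP : ∃ i, P i)
    (hB : ∀ i, P i → f i ≤ B) : ∃ i, P i ∧ ∀ j, P j → f j ≤ f i := by
  have hbdd : BddAbove (f '' {i | P i}) := ⟨B, by rintro _ ⟨i, hi, rfl⟩; exact hB i hi⟩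
  obtain ⟨_, ⟨i, hi, rfl⟩, hmax⟩ := hbdd.exists_isGreatest_of_nonempty (Set.Nonempty.image f hP)
  exact ⟨i, hi, fun j hj => hmax ⟨j, hj, rfl⟩⟩

/-! ### Euler walks -/

section Euler

variable {V : Type*} [DecidableEq V] {G : SimpleGraph V} {a b s t : V}

/-- The number of times a walk uses each edge. -/
def traversals (w : G.Walk a b) (e : G.edgeSet) : ℕ := w.edges.count e.1

lemma traversals_nil : traversals (.nil : G.Walk a a) = 0 := rfl

lemma traversals_cons {c : V} (h : G.Adj a c) (w : G.Walk c b) :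
    traversals (.cons h w) = Pi.single ⟨s(a, c), h⟩ 1 + traversals w := by
  funext e
  simp only [traversals, Walk.edges_cons, List.count_cons, beq_iff_eq, Pi.add_apply,
    Pi.single_apply, Subtype.ext_iff, eq_comm (a := s(a, c))]
  exact add_comm _ _

lemma traversals_append {c : V} (w : G.Walk a c) (w' : G.Walk c b) :
    traversals (w.append w') = traversals w + traversals w' := by
  funext e
  rw [traversals, Walk.edges_append, List.count_append]
  rfl

lemma traversals_concat {c : V} (w : G.Walk a c) (h : G.Adj c b) :
    traversals (w.concat h) = traversals w + Pi.single ⟨s(c, b), h⟩ 1 := by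
  rw [Walk.concat_eq_append, traversals_append, traversals_cons, traversals_nil, add_zero]

lemma traversals_le_one {w : G.Walk a b} (hw : w.IsPath) (e : G.edgeSet) :
    traversals w e ≤ 1 :=
  List.nodup_iff_count_le_one.1 hw.isTrail.edges_nodup e.1

variable [Fintype G.edgeSet]

lemma sum_traversals (w : G.Walk a b) : ∑ e, traversals w e = w.length := by
  induction w with
  | nil => simp [traversals_nil]
  | cons h w ih =>
    simp only [traversals_cons, Pi.add_apply, Finset.sum_add_distrib, ih, Finset.sum_pi_single',
      Finset.mem_univ, if_true, Walk.length_cons, add_comm]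

lemma length_le_of_traversals_le {w : G.Walk a b} {m : G.edgeSet → ℕ} (hw : traversals w ≤ m) :
    w.length ≤ ∑ e, m e :=
  sum_traversals w ▸ Finset.sum_le_sum fun e _ => hw e

variable {p q : G.edgeSet → V} (hpq : ∀ e, s(p e, q e) = e)
include hpq

lemma boundary_traversals (w : G.Walk a b) :
    boundary p q (fun e => (traversals w e : ZMod 2)) = Pi.single a 1 + Pi.single b 1 := by
  induction w with
  | nil =>
    rw [ZModModule.add_self, traversals_nil]
    exact map_zero _
  | @cons a c b h w ih =>
    have hcons : (fun e => (traversals (.cons h w) e : ZMod 2)) =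
        Pi.single ⟨s(a, c), h⟩ 1 + fun e => (traversals w e : ZMod 2) := by
      funext e
      rw [traversals_cons]
      simp [Pi.single_apply]
    rw [hcons, map_add, ih, boundary_single_of_ends (hpq _), ZModModule.add_add_add_cancel]

lemma boundary_congr_at {J K : G.edgeSet → ZMod 2} {v : V} (h : ∀ e, v ∈ e.1 → J e = K e) :
    boundary p q J v = boundary p q K v := by
  rw [boundary_apply, boundary_apply]
  congr 1 <;> refine Finset.sum_congr rfl fun e he => h e ?_ <;>
    rw [← hpq e, ← (Finset.mem_filter.1 he).2]
  exacts [Sym2.mem_mk_left _ _, Sym2.mem_mk_right _ _]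

variable {m : G.edgeSet → ℕ}

lemma exists_exhausting_walk
    (hm : boundary p q (fun e => (m e : ZMod 2)) = Pi.single s 1 + Pi.single t 1) :
    ∃ w : G.Walk s t, traversals w ≤ m ∧ ∀ e, t ∈ e.1 → traversals w e = m e := by
  obtain ⟨⟨x, w⟩, hw : traversals w ≤ m, hmax⟩ := exists_forall_le_of_le (ι := Σ x, G.Walk s x)
    (P := fun w => traversals w.2 ≤ m) (f := fun w => w.2.length)
    ⟨⟨s, .nil⟩, traversals_nil.trans_le fun _ => Nat.zero_le _⟩ fun w => length_le_of_traversals_le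
  have hexhaust : ∀ e, x ∈ e.1 → traversals w e = m e := by
    rintro ⟨e, he⟩ hx
    by_contra hne
    obtain ⟨y, rfl⟩ := Sym2.mem_iff_exists.1 hx
    have hadj : G.Adj x y := he
    have hconcat : traversals (w.concat hadj) ≤ m := by
      intro f
      rw [traversals_concat, Pi.add_apply]
      rcases eq_or_ne f ⟨s(x, y), he⟩ with rfl | hf
      · rw [Pi.single_eq_same]
        exact lt_of_le_of_ne (hw _) hne
      · rw [Pi.single_eq_of_ne hf]
        exact hw f
    have := hmax ⟨y, w.concat hadj⟩ hconcat
    simp only [Walk.length_concat] at this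
    omega
  obtain rfl : x = t := by
    have hx := boundary_congr_at hpq fun e he => congrArg (Nat.cast (R := ZMod 2)) (hexhaust e he)
    rw [boundary_traversals hpq, hm] at hx
    by_contra hxt
    simp [hxt] at hx
  exact ⟨w, hw, hexhaust⟩

lemma exists_longer_walk {w : G.Walk s t} (hw : traversals w ≤ m)
    (hm : boundary p q (fun e => (m e : ZMod 2)) = Pi.single s 1 + Pi.single t 1) {u : V}
    (hu : u ∈ w.support) {e : G.edgeSet} (hue : u ∈ e.1) (he : traversals w e < m e) :
    ∃ w' : G.Walk s t, traversals w' ≤ m ∧ w.length < w'.length := by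
  obtain ⟨c, hc, hexhaust⟩ := exists_exhausting_walk (s := u) (t := u)
    (m := m - traversals w) hpq <| by
    have hsub : (fun e => ((m - traversals w) e : ZMod 2)) =
        (fun e => (m e : ZMod 2)) - fun e => (traversals w e : ZMod 2) := by
      funext e
      exact Nat.cast_sub (hw e)
    rw [hsub, map_sub, hm, boundary_traversals hpq, sub_self, ZModModule.add_self]
  have hlength : 0 < c.length := by
    have hce : traversals c e ≤ c.length := c.length_edges ▸ List.count_le_length
    have := hexhaust e hue
    rw [Pi.sub_apply] at this
    omega
  refine ⟨(w.takeUntil u hu).append (c.append (w.dropUntil u hu)), fun f => ?_, ?_⟩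
  · have hf := congrArg (fun w => traversals w f) (w.take_spec hu)
    have hcf := hc f
    have hwf : traversals w f ≤ m f := hw f
    simp only [traversals_append, Pi.add_apply, Pi.sub_apply] at hf hcf ⊢
    omega
  · have hlen := congrArg Walk.length (w.take_spec hu)
    simp only [Walk.length_append] at hlen ⊢
    omega

/-- Euler's theorem: `m` is a connected multigraph whose odd-degree vertices are `s` and `t`. -/
theorem exists_spanning_walk_length_le
    (hm : boundary p q (fun e => (m e : ZMod 2)) = Pi.single s 1 + Pi.single t 1)
    (hconn : ∀ A : Set V, s ∈ A → (∀ e, m e ≠ 0 → ∀ u ∈ e.1, u ∈ A → ∀ v ∈ e.1, v ∈ A) →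
      ∀ v, v ∈ A) :
    ∃ w : G.Walk s t, (∀ v, v ∈ w.support) ∧ w.length ≤ ∑ e, m e := by
  obtain ⟨w₀, hw₀, -⟩ := exists_exhausting_walk hpq hm
  obtain ⟨w, hw, hmax⟩ := exists_forall_le_of_le (ι := G.Walk s t) (P := fun w => traversals w ≤ m)
    (f := Walk.length) ⟨w₀, hw₀⟩ fun w => length_le_of_traversals_le
  refine ⟨w, hconn {v | v ∈ w.support} w.start_mem_support fun e he u hue hu v hve => ?_,
    length_le_of_traversals_le hw⟩
  by_contra hv
  have hunused : traversals w e = 0 :=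
    List.count_eq_zero.2 fun hmem => hv (w.mem_support_of_mem_edges hmem hve)
  obtain ⟨w', hw', hlt⟩ := exists_longer_walk hpq hw hm hu hue (by omega)
  exact (hmax w' hw').not_gt hlt

end Euler

/-! ### Depth-first search trees -/

/-- A spanning tree of `G` rooted at `r`, presented by its parent function (with the root its own
parent) and the distance to the root inside the tree. -/
structure RootedTree {V : Type*} (G : SimpleGraph V) (r : V) where
  parent : V → V
  depth : V → ℕ
  parent_root : parent r = r
  depth_root : depth r = 0
  adj_parent : ∀ v, v ≠ r → G.Adj v (parent v)
  depth_eq : ∀ v, v ≠ r → depth v = depth (parent v) + 1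

namespace RootedTree

variable {V : Type*} {G : SimpleGraph V} {r : V} (T : RootedTree G r) {a b v : V}

/-- The reflexive ancestor relation of a rooted tree. -/
def IsAncestor (a v : V) : Prop := ∃ k, T.parent^[k] v = a

variable {T}

namespace IsAncestor

lemma refl (v : V) : T.IsAncestor v v := ⟨0, rfl⟩

lemma parent (v : V) : T.IsAncestor (T.parent v) v := ⟨1, rfl⟩

lemma trans {c : V} (hab : T.IsAncestor a b) (hbc : T.IsAncestor b c) : T.IsAncestor a c := by
  obtain ⟨k, rfl⟩ := hab
  obtain ⟨l, rfl⟩ := hbc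
  exact ⟨k + l, Function.iterate_add_apply _ _ _ _⟩

lemma parent_of_ne (h : T.IsAncestor a v) (hne : v ≠ a) : T.IsAncestor a (T.parent v) := by
  obtain ⟨_ | k, hk⟩ := h
  exacts [absurd hk hne, ⟨k, hk⟩]

lemma total (ha : T.IsAncestor a v) (hb : T.IsAncestor b v) :
    T.IsAncestor a b ∨ T.IsAncestor b a := by
  obtain ⟨k, rfl⟩ := ha
  obtain ⟨l, rfl⟩ := hb
  rcases le_total k l with h | h
  · exact .inr ⟨l - k, by rw [← Function.iterate_add_apply, Nat.sub_add_cancel h]⟩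
  · exact .inl ⟨k - l, by rw [← Function.iterate_add_apply, Nat.sub_add_cancel h]⟩

lemma depth_le (h : T.IsAncestor a v) : T.depth a ≤ T.depth v := by
  obtain ⟨k, rfl⟩ := h
  induction k with
  | zero => rfl
  | succ k ih =>
    rw [Function.iterate_succ_apply']
    by_cases hr : T.parent^[k] v = r
    · simpa only [hr, T.parent_root] using ih
    · have := T.depth_eq _ hr
      omega

lemma exists_child (h : T.IsAncestor a v) (hne : v ≠ a) :
    ∃ c, c ≠ r ∧ T.parent c = a ∧ T.IsAncestor c v := by
  obtain ⟨k, hk⟩ := h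
  induction k generalizing v with
  | zero => exact absurd hk hne
  | succ k ih =>
    rw [Function.iterate_succ_apply] at hk
    by_cases hv : T.parent v = a
    · refine ⟨v, ?_, hv, refl v⟩
      rintro rfl
      exact hne (T.parent_root.symm.trans hv)
    · obtain ⟨c, hcr, hca, hcv⟩ := ih hv hk
      exact ⟨c, hcr, hca, hcv.trans (parent v)⟩

end IsAncestor

lemma eq_root_of_depth_eq_zero (hv : T.depth v = 0) : v = r := by
  by_contra hne
  have := T.depth_eq v hne
  omega

lemma depth_iterate_parent (v : V) {k : ℕ} (hk : k ≤ T.depth v) :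
    T.depth (T.parent^[k] v) + k = T.depth v := by
  induction k with
  | zero => rfl
  | succ k ih =>
    have hprev := ih (by omega)
    have hne : T.parent^[k] v ≠ r := by
      intro hr
      rw [hr, T.depth_root] at hprev
      omega
    rw [Function.iterate_succ_apply']
    have := T.depth_eq _ hne
    omega

lemma isAncestor_root (v : V) : T.IsAncestor r v := by
  have := depth_iterate_parent (T := T) v le_rfl
  exact ⟨T.depth v, eq_root_of_depth_eq_zero (T := T) (by omega)⟩

lemma IsAncestor.eq_root (h : T.IsAncestor a r) : a = r :=
  eq_root_of_depth_eq_zero (Nat.le_zero.1 (T.depth_root ▸ h.depth_le))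

lemma IsAncestor.depth_lt (h : T.IsAncestor a v) (hne : v ≠ a) : T.depth a < T.depth v := by
  have hvr : v ≠ r := by
    rintro rfl
    exact hne h.eq_root.symm
  rw [T.depth_eq v hvr]
  exact Nat.lt_succ_of_le (h.parent_of_ne hne).depth_le

lemma depth_lt_card [Fintype V] (v : V) : T.depth v < Fintype.card V := by
  have hinj : Function.Injective fun i : Fin (T.depth v + 1) => T.parent^[i] v := by
    intro i j hij
    have hi := T.depth_iterate_parent v (Nat.lt_succ_iff.1 i.2)
    have hj := T.depth_iterate_parent v (Nat.lt_succ_iff.1 j.2)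
    rw [show T.parent^[i] v = T.parent^[j] v from hij] at hi
    exact Fin.ext (by omega)
  simpa using Fintype.card_le_of_injective _ hinj

lemma exists_graft {u : V} (huv : G.Adj u v) (hdepth : T.depth v ≤ T.depth u)
    (hnot : ¬T.IsAncestor v u) :
    ∃ T' : RootedTree G r, T.depth ≤ T'.depth ∧ T.depth v < T'.depth v := by
  classical
  have hvr : v ≠ r := by
    rintro rfl
    exact hnot (isAncestor_root u)
  refine ⟨{
    parent := Function.update T.parent v u
    depth := fun x => if T.IsAncestor v x then T.depth x + (T.depth u + 1 - T.depth v)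
      else T.depth x
    parent_root := by rw [Function.update_of_ne hvr.symm, T.parent_root]
    depth_root := by rw [if_neg fun h => hvr h.eq_root, T.depth_root]
    adj_parent := fun x hx => ?_
    depth_eq := fun x hx => ?_ }, fun x => ?_, ?_⟩
  · rcases eq_or_ne x v with rfl | hxv
    · rw [Function.update_self]
      exact huv.symm
    · rw [Function.update_of_ne hxv]
      exact T.adj_parent x hx
  · rcases eq_or_ne x v with rfl | hxv
    · rw [Function.update_self, if_pos (.refl x), if_neg hnot]
      omega
    · rw [Function.update_of_ne hxv]
      have hiff : T.IsAncestor v (T.parent x) ↔ T.IsAncestor v x :=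
        ⟨fun h => h.trans (.parent x), fun h => h.parent_of_ne hxv⟩
      have := T.depth_eq x hx
      simp only [hiff]
      split_ifs <;> omega
  · dsimp only
    split_ifs <;> omega
  · dsimp only
    rw [if_pos (.refl v)]
    omega

end RootedTree

lemma exists_rootedTree {V : Type*} {G : SimpleGraph V} (hG : G.Connected) (r : V) :
    Nonempty (RootedTree G r) := by
  classical
  have hcloser : ∀ v, ∃ u, v ≠ r → G.Adj v u ∧ G.dist v r = G.dist u r + 1 := by
    intro v
    obtain ⟨w, hw⟩ := (hG v r).exists_walk_length_eq_dist
    cases w with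
    | nil => exact ⟨r, fun h => absurd rfl h⟩
    | @cons _ u _ h w =>
      refine ⟨u, fun _ => ⟨h, ?_⟩⟩
      have htri := hG.dist_triangle (u := v) (v := u) (w := r)
      have hone : G.dist v u = 1 := dist_eq_one_iff_adj.2 h
      have hle := dist_le w
      rw [Walk.length_cons] at hw
      omega
  choose next hnext using hcloser
  exact ⟨{
    parent := Function.update next r r
    depth := fun v => G.dist v r
    parent_root := Function.update_self ..
    depth_root := dist_self
    adj_parent := fun v hv => by rw [Function.update_of_ne hv]; exact (hnext v hv).1
    depth_eq := fun v hv => by rw [Function.update_of_ne hv]; exact (hnext v hv).2 }⟩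

/-- A depth-first search tree: every edge of `G` joins a vertex `lower e` to an ancestor `upper e`
of it. -/
structure DFSTree {V : Type*} (G : SimpleGraph V) (r : V) extends RootedTree G r where
  lower : G.edgeSet → V
  upper : G.edgeSet → V
  mk_lower_upper : ∀ e, s(lower e, upper e) = e
  isAncestor_upper_lower : ∀ e, toRootedTree.IsAncestor (upper e) (lower e)

/-- A rooted tree with the greatest possible sum of depths is a depth-first search tree, as
otherwise an edge between incomparable vertices allows to graft one below the other. -/
lemma exists_dfsTree {V : Type*} [Finite V] {G : SimpleGraph V} (hG : G.Connected) (r : V) :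
    Nonempty (DFSTree G r) := by
  have := Fintype.ofFinite V
  obtain ⟨T₀⟩ := exists_rootedTree hG r
  obtain ⟨T, -, hmax⟩ := exists_forall_le_of_le (P := fun _ => True)
    (f := fun T : RootedTree G r => ∑ v, T.depth v) ⟨T₀, trivial⟩
    fun T _ => Finset.sum_le_sum fun v _ => (T.depth_lt_card v).le
  have hcomparable (u v : V) (huv : G.Adj u v) (hdepth : T.depth v ≤ T.depth u) :
      T.IsAncestor v u := by
    by_contra hnot
    obtain ⟨T', hle, hlt⟩ := T.exists_graft huv hdepth hnot
    exact (hmax T' trivial).not_gt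
      (Finset.sum_lt_sum (fun x _ => hle x) ⟨v, Finset.mem_univ v, hlt⟩)
  have hends : ∀ e : G.edgeSet, ∃ l u, s(l, u) = e.1 ∧ T.IsAncestor u l := by
    rintro ⟨⟨x, y⟩, hxy⟩
    rcases le_total (T.depth y) (T.depth x) with h | h
    · exact ⟨x, y, rfl, hcomparable x y hxy h⟩
    · exact ⟨y, x, Sym2.eq_swap, hcomparable y x hxy.symm h⟩
  choose lower upper hmk hanc using hends
  exact ⟨{ T with
    lower := lower
    upper := upper
    mk_lower_upper := hmk
    isAncestor_upper_lower := hanc }⟩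

/-! ### Two-connected subcubic graphs -/

section TwoConnected

variable {V : Type*} {G : SimpleGraph V}

lemma exists_adj_of_connected_induce_ne {a b z : V} (hz : (G.induce {u : V | u ≠ z}).Connected)
    (haz : a ≠ z) (hbz : b ≠ z) {A : Set V} (ha : a ∈ A) (hb : b ∉ A) :
    ∃ x y, x ≠ z ∧ y ≠ z ∧ x ∈ A ∧ y ∉ A ∧ G.Adj x y := by
  obtain ⟨w⟩ := hz ⟨a, haz⟩ ⟨b, hbz⟩
  obtain ⟨d, -, hfst, hsnd⟩ := w.exists_boundary_dart (Subtype.val ⁻¹' A) ha hb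
  exact ⟨d.fst, d.snd, d.fst.2, d.snd.2, hfst, hsnd, d.adj⟩

lemma sum_cut_ne_one [Fintype V] [DecidableEq V] [Fintype G.edgeSet] {p q : G.edgeSet → V}
    (hpq : ∀ e, s(p e, q e) = e) (hcard : 3 ≤ Fintype.card V)
    (h2vc : ∀ v : V, (G.induce {u : V | u ≠ v}).Connected) (S : Finset V) :
    ∑ e, cut p q S e ≠ 1 := by
  intro hsum
  obtain ⟨e, -, he⟩ := Finset.exists_ne_zero_of_sum_ne_zero (hsum ▸ one_ne_zero)
  have huniq : ∀ f, cut p q S f = 1 → f = e := by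
    intro f hf
    by_contra hfe
    have := Finset.add_le_sum (f := cut p q S) (fun _ _ => Nat.zero_le _) (Finset.mem_univ f)
      (Finset.mem_univ e) hfe
    omega
  obtain ⟨x, hx, y, hy, hxy⟩ := exists_ends_of_cut_ne_zero he
  have hsep : ∀ z ∈ e.1, ∀ a b, a ≠ z → b ≠ z → a ∈ S → b ∈ S := by
    intro z hz a b haz hbz ha
    by_contra hb
    obtain ⟨c, d, hcz, hdz, hc, hd, hcd⟩ :=
      exists_adj_of_connected_induce_ne (h2vc z) haz hbz (A := S) ha hb
    have hcut : cut p q S ⟨s(c, d), hcd⟩ = 1 := cut_eq_one_of_ends (hpq _) hc hd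
    rw [← huniq _ hcut] at hz
    rcases Sym2.mem_iff.1 hz with rfl | rfl
    exacts [hcz rfl, hdz rfl]
  rw [hpq e] at hxy
  obtain ⟨w, hw⟩ := Finset.exists_mem_notMem_of_card_lt_card (s := {x, y}) (t := Finset.univ)
    (Finset.card_le_two.trans_lt hcard)
  simp only [Finset.mem_univ, Finset.mem_insert, Finset.mem_singleton, true_and, not_or] at hw
  have hyx : y ≠ x := fun h => hy (h ▸ hx)
  by_cases hwS : w ∈ S
  · exact hy (hsep x (hxy ▸ Sym2.mem_mk_left x y) w y hw.1 hyx hwS)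
  · exact hwS (hsep y (hxy ▸ Sym2.mem_mk_right x y) x w hyx.symm hw.2 hx)

end TwoConnected

namespace DFSTree

variable {V : Type*} {G : SimpleGraph V} {r : V} (T : DFSTree G r) {c v : V} {e f : G.edgeSet}

lemma adj_lower_upper (e : G.edgeSet) : G.Adj (T.lower e) (T.upper e) := by
  rw [← mem_edgeSet, T.mk_lower_upper]
  exact e.2

lemma depth_upper_lt (e : G.edgeSet) : T.depth (T.upper e) < T.depth (T.lower e) :=
  (T.isAncestor_upper_lower e).depth_lt (T.adj_lower_upper e).ne

lemma lower_ne_root (e : G.edgeSet) : T.lower e ≠ r := by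
  intro h
  have := T.depth_upper_lt e
  rw [h, T.depth_root] at this
  omega

variable {T}

lemma edge_ext (hlower : T.lower e = T.lower f) (hupper : T.upper e = T.upper f) : e = f :=
  Subtype.ext (by rw [← T.mk_lower_upper e, ← T.mk_lower_upper f, hlower, hupper])

lemma isAncestor_or_isAncestor {u v : V} (h : G.Adj u v) :
    T.IsAncestor u v ∨ T.IsAncestor v u := by
  have hanc := T.isAncestor_upper_lower ⟨s(u, v), h⟩
  rcases Sym2.eq_iff.1 (T.mk_lower_upper ⟨s(u, v), h⟩) with ⟨hl, hu⟩ | ⟨hl, hu⟩ <;>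
    rw [hl, hu] at hanc
  exacts [.inr hanc, .inl hanc]

lemma exists_parentEdge (hv : v ≠ r) : ∃ e, T.lower e = v ∧ T.upper e = T.parent v := by
  refine ⟨⟨s(v, T.parent v), T.adj_parent v hv⟩, ?_⟩
  have hdepth := T.depth_eq v hv
  have hlt := T.depth_upper_lt ⟨s(v, T.parent v), T.adj_parent v hv⟩
  rcases Sym2.eq_iff.1 (T.mk_lower_upper ⟨s(v, T.parent v), T.adj_parent v hv⟩) with h | ⟨hl, hu⟩
  · exact h
  · rw [hl, hu] at hlt
    omega

lemma isAncestor_of_parent_eq_root (hr : (G.induce {u : V | u ≠ r}).Connected) (hc : c ≠ r)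
    (hparent : T.parent c = r) (hv : v ≠ r) : T.IsAncestor c v := by
  by_contra hnot
  obtain ⟨x, y, -, hyr, hx, hy, hxy⟩ :=
    exists_adj_of_connected_induce_ne hr hc hv (A := {u | T.IsAncestor c u}) (.refl c) hnot
  rcases isAncestor_or_isAncestor (T := T) hxy with h | h
  · exact hy (hx.trans h)
  · rcases hx.total h with hcy | hyc
    · exact hy hcy
    · have hcy : c ≠ y := fun heq => hy (heq ▸ .refl c)
      exact hyr (hparent ▸ hyc.parent_of_ne hcy).eq_root

variable (T)

/-- The edges of the depth-first search tree, the other edges of the graph being back edges. -/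
def IsTreeEdge (e : G.edgeSet) : Prop := T.parent (T.lower e) = T.upper e

open Classical in
/-- The multigraph carrying the spanning walk: every edge has multiplicity of parity `1 + J e`, and
multiplicity `2` is only used to connect a vertex whose downward edges would otherwise vanish. -/
noncomputable def multiplicity (J : G.edgeSet → ZMod 2) (e : G.edgeSet) : ℕ :=
  if J e = 0 then 1
  else if T.IsTreeEdge e ∧ ∀ f, T.upper f = T.upper e → ¬T.IsTreeEdge f → J f = 1 then 2
  else 0

variable {T} {J : G.edgeSet → ZMod 2}

lemma natCast_multiplicity (e : G.edgeSet) : (T.multiplicity J e : ZMod 2) = 1 + J e := by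
  rw [multiplicity]
  split_ifs with h
  · rw [h, Nat.cast_one, add_zero]
  · rw [zmodTwo_eq_one h, Nat.cast_two, one_add_one_eq_two]
  · rw [zmodTwo_eq_one h, Nat.cast_zero, CharTwo.add_self_eq_zero]

lemma multiplicity_le (e : G.edgeSet) : T.multiplicity J e ≤ 1 + (J e).val := by
  rw [multiplicity]
  split_ifs with h
  · exact Nat.le_add_right 1 _
  · rw [zmodTwo_eq_one h, ZMod.val_one]
  · exact Nat.zero_le _

variable (T) [DecidableEq V] [Fintype G.edgeSet]

/-- The edges whose deeper end is `v`. -/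
def upEdges (v : V) : Finset G.edgeSet := {e | T.lower e = v}

/-- The edges whose shallower end is `v`. -/
def downEdges (v : V) : Finset G.edgeSet := {e | T.upper e = v}

open Classical in
/-- The tree edges from `v` to its children. -/
noncomputable def childEdges (v : V) : Finset G.edgeSet := {e ∈ T.downEdges v | T.IsTreeEdge e}

variable {T}

@[simp]
lemma mem_upEdges : e ∈ T.upEdges v ↔ T.lower e = v := by
  simp only [upEdges, Finset.mem_filter, Finset.mem_univ, true_and]

@[simp]
lemma mem_downEdges : e ∈ T.downEdges v ↔ T.upper e = v := by
  simp only [downEdges, Finset.mem_filter, Finset.mem_univ, true_and]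

@[simp]
lemma mem_childEdges : e ∈ T.childEdges v ↔ T.upper e = v ∧ T.IsTreeEdge e := by
  simp only [childEdges, Finset.mem_filter, mem_downEdges]

lemma parent_lower_of_mem_childEdges (he : e ∈ T.childEdges v) : T.parent (T.lower e) = v :=
  (mem_childEdges.1 he).2.trans (mem_childEdges.1 he).1

lemma upEdges_root : T.upEdges r = ∅ :=
  Finset.filter_false_of_mem fun e _ => T.lower_ne_root e

lemma exists_mem_childEdges (h : T.IsAncestor v c) (hne : c ≠ v) :
    ∃ e ∈ T.childEdges v, T.IsAncestor (T.lower e) c := by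
  obtain ⟨d, hd, hparent, hanc⟩ := h.exists_child hne
  obtain ⟨e, hlower, hupper⟩ := exists_parentEdge (T := T) hd
  refine ⟨e, mem_childEdges.2 ⟨hupper.trans hparent, ?_⟩, hlower ▸ hanc⟩
  rw [IsTreeEdge, hlower, hupper]

lemma card_upEdges_add_card_downEdges_le [Fintype V] [DecidableRel G.Adj] :
    (T.upEdges v).card + (T.downEdges v).card ≤ G.degree v := by
  have hdisj : Disjoint (T.upEdges v) (T.downEdges v) := Finset.disjoint_left.2 fun e hu hd =>
    (T.adj_lower_upper e).ne ((mem_upEdges.1 hu).trans (mem_downEdges.1 hd).symm)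
  rw [← Finset.card_union_of_disjoint hdisj, ← card_incidenceFinset_eq_degree]
  refine Finset.card_le_card_of_injOn Subtype.val (fun e he => ?_) Subtype.val_injective.injOn
  refine (mem_incidenceFinset ..).2 ⟨e.2, ?_⟩
  rw [← T.mk_lower_upper e]
  rcases Finset.mem_union.1 he with h | h
  · exact mem_upEdges.1 h ▸ Sym2.mem_mk_left _ _
  · exact mem_downEdges.1 h ▸ Sym2.mem_mk_right _ _

lemma exists_childEdges_eq_upEdges_eq [Fintype V] [DecidableRel G.Adj] (hdeg : G.degree v ≤ 3)
    (hv : v ≠ r) (hf : T.upper f = v) (hback : ¬T.IsTreeEdge f) :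
    ∃ e g, T.childEdges v = {e} ∧ T.upEdges v = {g} ∧ (T.downEdges v).card = 2 := by
  classical
  obtain ⟨g, hg, -⟩ := exists_parentEdge (T := T) hv
  obtain ⟨e, he, -⟩ := exists_mem_childEdges (hf ▸ T.isAncestor_upper_lower f)
    (hf ▸ (T.adj_lower_upper f).ne)
  have hup : 0 < (T.upEdges v).card := Finset.card_pos.2 ⟨g, mem_upEdges.2 hg⟩
  have hchild : 0 < (T.childEdges v).card := Finset.card_pos.2 ⟨e, he⟩
  have hdown : (T.childEdges v).card < (T.downEdges v).card :=
    Finset.card_lt_card (Finset.filter_ssubset.2 ⟨f, mem_downEdges.2 hf, hback⟩)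
  have hcard := (card_upEdges_add_card_downEdges_le (T := T)).trans hdeg
  obtain ⟨e, he⟩ := Finset.card_eq_one.1 (show (T.childEdges v).card = 1 by omega)
  obtain ⟨g, hg⟩ := Finset.card_eq_one.1 (show (T.upEdges v).card = 1 by omega)
  exact ⟨e, g, he, hg, by omega⟩

lemma exists_childEdges_root_eq_singleton (hr : (G.induce {u : V | u ≠ r}).Connected) :
    ∃ e, T.childEdges r = {e} := by
  obtain ⟨v, hv⟩ := hr.nonempty
  obtain ⟨e, he, -⟩ := exists_mem_childEdges (T := T) (RootedTree.isAncestor_root v) hv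
  refine ⟨e, Finset.eq_singleton_iff_unique_mem.2 ⟨he, fun f hf => ?_⟩⟩
  have hanc := isAncestor_of_parent_eq_root hr (T.lower_ne_root e)
    (parent_lower_of_mem_childEdges he) (T.lower_ne_root f)
  have hupper := (mem_childEdges.1 hf).1.trans (mem_childEdges.1 he).1.symm
  refine edge_ext ?_ hupper
  by_contra hne
  have hlt := hanc.depth_lt hne
  have hde := T.depth_eq _ (T.lower_ne_root e)
  have hdf := T.depth_eq _ (T.lower_ne_root f)
  rw [parent_lower_of_mem_childEdges he] at hde
  rw [parent_lower_of_mem_childEdges hf] at hdf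
  omega

lemma sum_card_childEdges [Fintype V] : ∑ v, (T.childEdges v).card + 1 = Fintype.card V := by
  classical
  have hfiber : ∑ v, (T.childEdges v).card = (Finset.univ.filter T.IsTreeEdge).card := by
    rw [Finset.card_eq_sum_card_fiberwise fun e _ => Finset.mem_univ (T.upper e)]
    simp only [childEdges, downEdges, Finset.filter_comm]
  have hlower : (Finset.univ.filter T.IsTreeEdge).card = (Finset.univ.erase r).card := by
    refine Finset.card_nbij T.lower (fun e _ => ?_) (fun e he f hf h => ?_) fun v hv => ?_
    · exact Finset.mem_erase.2 ⟨T.lower_ne_root e, Finset.mem_univ _⟩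
    · refine edge_ext h ?_
      rw [← (Finset.mem_filter.1 he).2, ← (Finset.mem_filter.1 hf).2, h]
    · obtain ⟨e, he, hupper⟩ := exists_parentEdge (T := T) (Finset.ne_of_mem_erase hv)
      refine ⟨e, Finset.mem_filter.2 ⟨Finset.mem_univ e, ?_⟩, he⟩
      rw [IsTreeEdge, he, hupper]
  rw [hfiber, hlower, Finset.card_erase_add_one (Finset.mem_univ r), Finset.card_univ]

lemma exists_childEdges_eq_singleton [Fintype V] [DecidableRel G.Adj] (hdeg : G.degree v ≤ 3)
    (hr : (G.induce {u : V | u ≠ r}).Connected) (hf : T.upper f = v) (hback : ¬T.IsTreeEdge f) :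
    ∃ e, T.childEdges v = {e} := by
  by_cases hv : v = r
  · subst hv
    exact exists_childEdges_root_eq_singleton hr
  · obtain ⟨e, -, he, -⟩ := exists_childEdges_eq_upEdges_eq hdeg hv hf hback
    exact ⟨e, he⟩

lemma sum_multiplicity_of_forall_eq_one (hv : T.childEdges v = {e})
    (hJ : ∀ f ∈ T.downEdges v, J f = 1) : ∑ f ∈ T.downEdges v, T.multiplicity J f = 2 := by
  have he := mem_childEdges.1 (hv.symm ▸ Finset.mem_singleton_self e)
  have hmem : e ∈ T.downEdges v := mem_downEdges.2 he.1
  rw [Finset.sum_eq_single_of_mem e hmem, multiplicity, if_neg (hJ e hmem ▸ one_ne_zero), if_pos]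
  · exact ⟨he.2, fun g hg _ => hJ g (mem_downEdges.2 (hg.trans he.1))⟩
  · intro f hf hfe
    rw [multiplicity, if_neg (hJ f hf ▸ one_ne_zero), if_neg]
    rintro ⟨htree, -⟩
    exact hfe (Finset.mem_singleton.1 (hv ▸ mem_childEdges.2 ⟨mem_downEdges.1 hf, htree⟩))

lemma multiplicity_add_val (hv : T.childEdges v = {e}) (hf : f ∈ T.downEdges v)
    (hJ : ¬∀ f ∈ T.downEdges v, J f = 1) : T.multiplicity J f + (J f).val = 1 := by
  rw [multiplicity]
  split_ifs with h htree
  · rw [h, ZMod.val_zero]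
  · refine absurd (fun g hg => ?_) hJ
    have hfv := mem_downEdges.1 hf
    by_cases hgtree : T.IsTreeEdge g
    · have hfe := Finset.mem_singleton.1 (hv ▸ mem_childEdges.2 ⟨hfv, htree.1⟩)
      have hge := Finset.mem_singleton.1 (hv ▸ mem_childEdges.2 ⟨mem_downEdges.1 hg, hgtree⟩)
      rw [hge, ← hfe]
      exact zmodTwo_eq_one h
    · exact htree.2 g ((mem_downEdges.1 hg).trans hfv.symm) hgtree
  · rw [zmodTwo_eq_one h, ZMod.val_one]

lemma sum_val_of_forall_eq_one (hJ : ∀ f ∈ T.downEdges v, J f = 1) :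
    ∑ f ∈ T.downEdges v, (J f).val = (T.downEdges v).card := by
  rw [Finset.card_eq_sum_ones]
  exact Finset.sum_congr rfl fun f hf => by rw [hJ f hf, ZMod.val_one]

lemma sum_multiplicity_add_sum_val (hv : T.childEdges v = {e})
    (hJ : ¬∀ f ∈ T.downEdges v, J f = 1) :
    ∑ f ∈ T.downEdges v, T.multiplicity J f + ∑ f ∈ T.downEdges v, (J f).val =
      (T.downEdges v).card := by
  rw [← Finset.sum_add_distrib, Finset.sum_congr rfl fun f hf => multiplicity_add_val hv hf hJ,
    Finset.card_eq_sum_ones]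

section Connectivity

variable [Fintype V] [DecidableRel G.Adj] (hdeg : ∀ v, G.degree v ≤ 3)
  (hr : (G.induce {u : V | u ≠ r}).Connected)
include hdeg hr

lemma exists_multiplicity_ne_zero (he : e ∈ T.childEdges v) :
    ∃ f, T.multiplicity J f ≠ 0 ∧ T.upper f = v ∧ T.IsAncestor (T.lower e) (T.lower f) := by
  by_cases hmult : T.multiplicity J e = 0
  · obtain ⟨f, hf, hback, hJf⟩ :
        ∃ f, T.upper f = T.upper e ∧ ¬T.IsTreeEdge f ∧ J f ≠ 1 := by
      by_contra! hall
      rw [multiplicity] at hmult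
      split_ifs at hmult with h h'
      exact h' ⟨(mem_childEdges.1 he).2, hall⟩
    rw [(mem_childEdges.1 he).1] at hf
    refine ⟨f, ?_, hf, ?_⟩
    · rw [multiplicity, if_pos (by by_contra h; exact hJf (zmodTwo_eq_one h))]
      exact one_ne_zero
    · obtain ⟨g, hg⟩ := exists_childEdges_eq_singleton (hdeg v) hr hf hback
      obtain ⟨d, hd, hanc⟩ := exists_mem_childEdges (hf ▸ T.isAncestor_upper_lower f)
        (hf ▸ (T.adj_lower_upper f).ne)
      rw [hg, Finset.mem_singleton] at he hd
      rwa [he, ← hd]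
  · exact ⟨e, hmult, (mem_childEdges.1 he).1, .refl _⟩

omit [DecidableEq V] [Fintype G.edgeSet] in
lemma mem_iff_of_isAncestor {A : Set V}
    (hA : ∀ e, T.multiplicity J e ≠ 0 → (T.lower e ∈ A ↔ T.upper e ∈ A)) (v : V) :
    ∀ u, T.IsAncestor v u → (v ∈ A ↔ u ∈ A) := by
  classical
  induction hk : Fintype.card V - T.depth v using Nat.strong_induction_on generalizing v with
  | _ k ih =>
    intro u hu
    by_cases huv : u = v
    · rw [huv]
    obtain ⟨e, he, hanc⟩ := exists_mem_childEdges hu huv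
    obtain ⟨f, hf, rfl, hef⟩ := exists_multiplicity_ne_zero (J := J) hdeg hr he
    have hdepth : T.depth (T.upper f) < T.depth (T.lower e) :=
      (mem_childEdges.1 he).1 ▸ T.depth_upper_lt e
    have hlower := ih _ (by have := T.depth_lt_card (T.lower e); omega) (T.lower e) rfl
    exact (hA f hf).symm.trans ((hlower _ hef).symm.trans (hlower u hanc))

omit [DecidableEq V] [Fintype G.edgeSet] in
lemma mem_of_closed_multiplicity {A : Set V} (hroot : r ∈ A)
    (hA : ∀ e, T.multiplicity J e ≠ 0 → ∀ u ∈ e.1, u ∈ A → ∀ v ∈ e.1, v ∈ A) (v : V) : v ∈ A := by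
  refine (mem_iff_of_isAncestor (T := T) (J := J) hdeg hr (fun e he => ?_) r v
    (RootedTree.isAncestor_root v)).1 hroot
  have hlower : T.lower e ∈ e.1 := T.mk_lower_upper e ▸ Sym2.mem_mk_left _ _
  have hupper : T.upper e ∈ e.1 := T.mk_lower_upper e ▸ Sym2.mem_mk_right _ _
  exact ⟨fun h => hA e he _ hlower h _ hupper, fun h => hA e he _ hupper h _ hlower⟩

end Connectivity

/-! ### Local bounds -/

variable (T) in
/-- The multigraph with edge multiplicities `x` has odd degree exactly at the ends of a walk from
the root to `t` (nowhere if `t` is the root). -/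
def OddAtEnds (t : V) (x : G.edgeSet → ℕ) : Prop :=
  boundary T.lower T.upper (fun e => (x e : ZMod 2)) = Pi.single r 1 + Pi.single t 1

variable {t : V} {x : G.edgeSet → ℕ}

lemma OddAtEnds.sum_mod_two (h : T.OddAtEnds t x) (v : V) :
    (∑ e ∈ T.upEdges v, x e + ∑ e ∈ T.downEdges v, x e) % 2 =
      if v = r ↔ v = t then 0 else 1 := by
  have hcast : ((∑ e ∈ T.upEdges v, x e + ∑ e ∈ T.downEdges v, x e : ℕ) : ZMod 2) =
      ((if v = r ↔ v = t then 0 else 1 : ℕ) : ZMod 2) := by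
    push_cast
    refine ((boundary_apply ..).symm.trans (congrFun h v)).trans ?_
    rw [Pi.add_apply, Pi.single_apply, Pi.single_apply]
    split_ifs <;> first | rfl | tauto
  have hmod := (ZMod.natCast_eq_natCast_iff' _ _ _).1 hcast
  split_ifs at hmod ⊢ <;> exact hmod

variable (T) in
/-- The multiplicities of the edges below `v` are bounded by an affine function of `J`, whose value
at `J = (1 + P) / 3` is at most a third of the share of `v` in `4 * (n - 1) + ∑ e, P e + 2`. -/
def HasLocalBound (P : G.edgeSet → ℕ) (t v : V) : Prop :=
  ∃ (a : G.edgeSet → ℤ) (k : ℤ),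
    3 * k + ∑ e, a e * (1 + P e : ℕ) ≤
      4 * (T.childEdges v).card + (∑ e ∈ T.downEdges v, P e : ℕ) + (if v = r then 2 else 0) ∧
    ∀ J, T.OddAtEnds t (fun e => 1 + (J e).val) →
      (∑ e ∈ T.downEdges v, T.multiplicity J e : ℕ) ≤ k + ∑ e, a e * (J e).val

variable {P : G.edgeSet → ℕ}

lemma hasLocalBound_of_forall_isTreeEdge (h : ∀ e ∈ T.downEdges v, T.IsTreeEdge e) :
    T.HasLocalBound P t v := by
  classical
  refine ⟨fun e => if e ∈ T.downEdges v then 1 else 0, (T.downEdges v).card, ?_, fun J _ => ?_⟩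
  · rw [childEdges, Finset.filter_true_of_mem h, sum_indicator_mul, sum_one_add]
    split_ifs <;> omega
  · have hle := Finset.sum_le_sum fun e (_ : e ∈ T.downEdges v) => T.multiplicity_le (J := J) e
    rw [sum_one_add] at hle
    rw [sum_indicator_mul]
    omega

section Root

variable (hcard : (T.downEdges r).card ≤ 3) (he : T.childEdges r = {e})
include hcard he

lemma hasLocalBound_root_of_eq : T.HasLocalBound P r r := by
  refine ⟨0, 2, ?_, fun J hodd => ?_⟩
  · simp only [he, Finset.card_singleton, Pi.zero_apply, zero_mul, Finset.sum_const_zero, if_true]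
    omega
  · simp only [Pi.zero_apply, zero_mul, Finset.sum_const_zero]
    by_cases hJ : ∀ f ∈ T.downEdges r, J f = 1
    · rw [sum_multiplicity_of_forall_eq_one he hJ]
      rfl
    · have hparity := hodd.sum_mod_two r
      rw [upEdges_root, Finset.sum_empty, sum_one_add, if_pos Iff.rfl] at hparity
      have hsum := sum_multiplicity_add_sum_val he hJ
      omega

lemma hasLocalBound_root_of_ne (hP : T.OddAtEnds t P) (hrt : r ≠ t) : T.HasLocalBound P t r := by
  have hparity {x : G.edgeSet → ℕ} (hx : T.OddAtEnds t x) :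
      (∑ e ∈ T.downEdges r, x e) % 2 = 1 := by
    simpa [upEdges_root, hrt] using hx.sum_mod_two r
  refine ⟨fun e => if e ∈ T.downEdges r then -1 else 0, (T.downEdges r).card, ?_, fun J hodd => ?_⟩
  · have := hparity hP
    rw [he, Finset.card_singleton, sum_indicator_mul, sum_one_add, if_pos rfl]
    omega
  · have hJparity := hparity hodd
    rw [sum_one_add] at hJparity
    have hJ : ¬∀ f ∈ T.downEdges r, J f = 1 := by
      intro hJ
      have := sum_val_of_forall_eq_one hJ
      omega
    have hsum := sum_multiplicity_add_sum_val he hJ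
    rw [sum_indicator_mul]
    omega

end Root

lemma hasLocalBound_of_card_downEdges_eq_two {g : G.edgeSet} (hv : v ≠ r)
    (he : T.childEdges v = {e}) (hg : T.upEdges v = {g}) (hcard : (T.downEdges v).card = 2)
    (hP : T.OddAtEnds t P) (hPg : P g ≤ 1) : T.HasLocalBound P t v := by
  have hparity {x : G.edgeSet → ℕ} (hx : T.OddAtEnds t x) :
      (x g + ∑ e ∈ T.downEdges v, x e) % 2 = if v = t then 1 else 0 := by
    simpa [hg, hv] using hx.sum_mod_two v
  have hPparity := hparity hP
  refine ⟨fun e => if e ∈ ({g} : Finset G.edgeSet) then (if v = t then -1 else 1) else 0,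
    if v = t then 2 else 1, ?_, fun J hodd => ?_⟩ <;> rw [sum_indicator_mul, Finset.sum_singleton]
  · rw [he, Finset.card_singleton, if_neg hv]
    split_ifs at hPparity ⊢ <;> omega
  · have hJparity := hparity hodd
    rw [sum_one_add] at hJparity
    have hJg := (J g).val_lt
    by_cases hJ : ∀ f ∈ T.downEdges v, J f = 1
    · have hsum := sum_val_of_forall_eq_one hJ
      rw [sum_multiplicity_of_forall_eq_one he hJ]
      split_ifs at hJparity ⊢ <;> omega
    · have hsum := sum_multiplicity_add_sum_val he hJ
      split_ifs at hJparity ⊢ <;> omega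

lemma hasLocalBound [Fintype V] [DecidableRel G.Adj] (hdeg : G.degree v ≤ 3)
    (hr : (G.induce {u : V | u ≠ r}).Connected) (hP : T.OddAtEnds t P) (hP1 : ∀ e, P e ≤ 1) :
    T.HasLocalBound P t v := by
  rcases eq_or_ne v r with rfl | hv
  · obtain ⟨e, he⟩ := exists_childEdges_root_eq_singleton (T := T) hr
    have hcard : (T.downEdges v).card ≤ 3 :=
      (Nat.le_add_left _ _).trans (card_upEdges_add_card_downEdges_le.trans hdeg)
    rcases eq_or_ne v t with rfl | hvt
    · exact hasLocalBound_root_of_eq hcard he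
    · exact hasLocalBound_root_of_ne hcard he hP hvt
  · by_cases h : ∀ e ∈ T.downEdges v, T.IsTreeEdge e
    · exact hasLocalBound_of_forall_isTreeEdge h
    · push Not at h
      obtain ⟨f, hf, hback⟩ := h
      obtain ⟨e, g, he, hg, hcard⟩ :=
        exists_childEdges_eq_upEdges_eq hdeg hv (mem_downEdges.1 hf) hback
      exact hasLocalBound_of_card_downEdges_eq_two hv he hg hcard hP (hP1 g)

lemma sum_downEdges [Fintype V] (y : G.edgeSet → ℕ) :
    ∑ v, ∑ e ∈ T.downEdges v, y e = ∑ e, y e :=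
  Finset.sum_fiberwise Finset.univ T.upper y

lemma oddAtEnds_one_add_val (hP : T.OddAtEnds t P)
    (hJ : boundary T.lower T.upper J =
      boundary T.lower T.upper (fun e => ((1 + P e : ℕ) : ZMod 2))) :
    T.OddAtEnds t (fun e => 1 + (J e).val) := by
  have hcast : (fun e => ((1 + P e : ℕ) : ZMod 2)) = 1 + fun e => (P e : ZMod 2) := by
    funext e
    rw [Nat.cast_add, Nat.cast_one, Pi.add_apply, Pi.one_apply]
  rw [OddAtEnds, natCast_one_add_val, map_add, hJ, hcast, map_add, ← add_assoc,
    ZModModule.add_self, zero_add]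
  exact hP

lemma oddAtEnds_multiplicity (h : T.OddAtEnds t (fun e => 1 + (J e).val)) :
    T.OddAtEnds t (T.multiplicity J) := by
  rw [OddAtEnds, natCast_one_add_val] at h
  rw [OddAtEnds, ← h]
  exact congrArg _ (funext natCast_multiplicity)

lemma exists_sum_multiplicity_le [Fintype V] [DecidableRel G.Adj] (hdeg : ∀ v, G.degree v ≤ 3)
    (hr : (G.induce {u : V | u ≠ r}).Connected)
    (hbridge : ∀ S : Finset V, ∑ e, cut T.lower T.upper S e ≠ 1)
    (hP : T.OddAtEnds t P) (hP1 : ∀ e, P e ≤ 1) :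
    ∃ J, T.OddAtEnds t (T.multiplicity J) ∧
      3 * ∑ e, T.multiplicity J e + 2 ≤ 4 * Fintype.card V + ∑ e, P e := by
  choose a k hshare hbound using fun v => hasLocalBound (v := v) (hdeg v) hr hP hP1
  obtain ⟨J, hJ, hle⟩ := exists_join_three_mul_sum_le (x := fun e => 1 + P e)
    (fun e => by have := hP1 e; omega) hbridge (fun e => ∑ v, a v e)
  have hodd := oddAtEnds_one_add_val hP hJ
  refine ⟨J, oddAtEnds_multiplicity hodd, ?_⟩
  have hshares := Finset.sum_le_sum fun v (_ : v ∈ Finset.univ) => hshare v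
  have hbounds := Finset.sum_le_sum fun v (_ : v ∈ Finset.univ) => hbound v J hodd
  have hchildren := sum_card_childEdges (T := T)
  have hswap (y : G.edgeSet → ℕ) : ∑ v, ∑ e, a v e * (y e : ℤ) = ∑ e, (∑ v, a v e) * y e := by
    rw [Finset.sum_comm]
    exact Finset.sum_congr rfl fun e _ => (Finset.sum_mul ..).symm
  rw [Finset.sum_add_distrib, Finset.sum_add_distrib, Finset.sum_add_distrib, hswap,
    ← Finset.mul_sum, ← Finset.mul_sum, Finset.sum_ite_eq', if_pos (Finset.mem_univ r),
    ← Nat.cast_sum, ← Nat.cast_sum, sum_downEdges] at hshares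
  rw [Finset.sum_add_distrib, hswap, ← Nat.cast_sum, sum_downEdges] at hbounds
  omega

end DFSTree

section Main

variable {V : Type*} [Fintype V] {G : SimpleGraph V}

theorem exists_spanning_walk_of_three_le_card [DecidableRel G.Adj] (hcard : 3 ≤ Fintype.card V)
    (hconn : G.Connected) (hdeg : ∀ v, G.degree v ≤ 3)
    (h2vc : ∀ v : V, (G.induce {u : V | u ≠ v}).Connected) (s t : V) :
    ∃ w : G.Walk s t, (∀ v, v ∈ w.support) ∧
      3 * w.length + 2 ≤ 4 * Fintype.card V + G.dist s t := by
  classical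
  obtain ⟨T⟩ := exists_dfsTree hconn s
  obtain ⟨p, hpath, hp⟩ := hconn.exists_path_of_dist s t
  obtain ⟨J, hodd, hle⟩ := T.exists_sum_multiplicity_le hdeg (h2vc s)
    (sum_cut_ne_one T.mk_lower_upper hcard h2vc) (boundary_traversals T.mk_lower_upper p)
    (traversals_le_one hpath)
  obtain ⟨w, hspan, hlength⟩ := exists_spanning_walk_length_le T.mk_lower_upper hodd
    fun A hs hA => DFSTree.mem_of_closed_multiplicity hdeg (h2vc s) hs hA
  refine ⟨w, hspan, ?_⟩
  rw [sum_traversals, hp] at hle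
  omega

lemma exists_spanning_walk_of_card_eq_two (hcard : Fintype.card V = 2) (hconn : G.Connected)
    (s t : V) :
    ∃ w : G.Walk s t, (∀ v, v ∈ w.support) ∧
      3 * w.length + 2 ≤ 4 * Fintype.card V + G.dist s t := by
  have hneighbor (x : V) : ∃ y, G.Adj x y ∧ ∀ z, z = x ∨ z = y := by
    obtain ⟨y, hyx, huniq⟩ := (Nat.card_eq_two_iff' x).1 (Nat.card_eq_fintype_card.trans hcard)
    have : Nontrivial V := ⟨y, x, hyx⟩
    obtain ⟨z, hz⟩ := hconn.preconnected.exists_adj_of_nontrivial x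
    exact ⟨y, huniq z hz.ne' ▸ hz, fun z => or_iff_not_imp_left.2 (huniq z)⟩
  obtain ⟨y, hadj, hall⟩ := hneighbor s
  rcases hall t with rfl | rfl
  · refine ⟨.cons hadj (.cons hadj.symm .nil), fun v => ?_, ?_⟩
    · rcases hall v with rfl | rfl <;> simp
    · simp [hcard]
  · refine ⟨hadj.toWalk, fun v => ?_, ?_⟩
    · rcases hall v with rfl | rfl <;> simp
    · simp [hcard, dist_eq_one_iff_adj.2 hadj]

end Main

end SpanningWalk

/-- A 2-vertex-connected subcubic simple graph on `n ≥ 2` vertices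
has, for any vertices `s, t`, a spanning walk from `s` to `t` of length at most
`4n/3 − 2/3 + dist_G(s,t)/3`. -/
theorem spanning_path_walk_subcubic_two_connected
    {V : Type*} [Fintype V] [DecidableEq V]
    (G : SimpleGraph V) [DecidableRel G.Adj]
    (hn : 2 ≤ Fintype.card V)
    (hconn : G.Connected)
    (hdeg : ∀ v : V, G.degree v ≤ 3)
    (h2vc : ∀ v : V, (G.induce {u : V | u ≠ v}).Connected)
    (s t : V) :
    ∃ w : G.Walk s t, (∀ u : V, u ∈ w.support) ∧
      (w.length : ℝ) ≤ 4 * Fintype.card V / 3 - 2 / 3 + (G.dist s t : ℝ) / 3 := by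
  have hwalk : ∃ w : G.Walk s t, (∀ u, u ∈ w.support) ∧
      3 * w.length + 2 ≤ 4 * Fintype.card V + G.dist s t := by
    rcases hn.eq_or_lt with hcard | hcard
    · exact SpanningWalk.exists_spanning_walk_of_card_eq_two hcard.symm hconn s t
    · exact SpanningWalk.exists_spanning_walk_of_three_le_card hcard hconn hdeg h2vc s t
  obtain ⟨w, hspan, hlength⟩ := hwalk
  refine ⟨w, hspan, ?_⟩
  have hlength' : (3 * w.length + 2 : ℝ) ≤ 4 * Fintype.card V + G.dist s t := by
    exact_mod_cast hlength
  linarith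
end

section
/- For every ε > 0 there exists N ∈ ℕ such that for every connected simple graph G on n ≥ N vertices and all vertices s,t of G, the graph G has a walk from s to t visiting every vertex of G of length at most (3 − √2 + ε) · OLP(G,s,t). -/
open SimpleGraph

/-- The value `Σ_{e ∈ E} x e` of an assignment `x` on the edges of `G`. -/
noncomputable def hkValue {V : Type*} (G : SimpleGraph V) (x : Sym2 V → ℝ) : ℝ :=
  ∑ᶠ e ∈ G.edgeSet, x e

/-- The total weight `Σ_{e ∈ δ(S)} x e` of the edges of `G` crossing the cut `(S, Sᶜ)`. -/
noncomputable def hkCut {V : Type*} (G : SimpleGraph V) (x : Sym2 V → ℝ)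
    (S : Set V) : ℝ :=
  ∑ᶠ e ∈ {e ∈ G.edgeSet | ∃ a b, e = s(a, b) ∧ a ∈ S ∧ b ∉ S}, x e

/-- Feasibility for the Held-Karp path relaxation of graph-TSPP on `(G, s, t)`. -/
def HKPathFeasible {V : Type*} (G : SimpleGraph V) (s t : V) (x : Sym2 V → ℝ) : Prop :=
  (∀ e, 0 ≤ x e) ∧
  ∀ S : Set V, S.Nonempty → S ≠ Set.univ →
    ((s ∈ S ↔ t ∈ S) → 2 ≤ hkCut G x S) ∧ (¬(s ∈ S ↔ t ∈ S) → 1 ≤ hkCut G x S)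

/-- The optimum value `OLP(G, s, t)` of the Held-Karp path relaxation on `(G, s, t)`. -/
noncomputable def OLPpath {V : Type*} [Fintype V] (G : SimpleGraph V) (s t : V) : ℝ :=
  sInf {y | ∃ x, HKPathFeasible G s t x ∧ y = hkValue G x}

/-!
Call an `s`-`t` cut narrow if its weight in the relaxation is less than `2`. By submodularity the
narrow cuts form a chain, and the cut constraints provide an edge between any two consecutive layers
of this chain, so that (Gao) some spanning tree `F` crosses every narrow cut exactly once. If `T` is
the set of vertices whose degree in `F` has the wrong parity for an `s`-`t` trail, then no narrow
cut is `T`-odd. All `T`-odd cuts therefore have weight at least `2`, and there is a `T`-join `J`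
with at most half as many edges as the value of the relaxation. An Eulerian trail of `F + J` is a
spanning walk whose length is at most `3/2` times that value, because `F` has at most as many edges
as the value by the degree constraints. Finally `3/2 < 3 - √2`.

The bound on `T`-joins is the Edmonds-Johnson theorem. Subdividing all edges reduces it to the
bipartite case, where the argument is Sebő's: for a suitable vertex `v ∈ T`, contracting `v` and its
neighbours lowers the minimum size of a join by at most one, while the fractional solution loses at
least the weight of the cut of `v`.
-/

namespace HeldKarp

open Finset
open scoped symmDiff

variable {V ι : Type*} [DecidableEq V]

section Boundary

/-- The endpoints of an edge as a vector over `ZMod 2`, so that a loop has the value `0`. -/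
def endpointSum : Sym2 V → V → ZMod 2 :=
  Sym2.lift ⟨fun u v => Pi.single u 1 + Pi.single v 1, fun _ _ => add_comm _ _⟩

/-- The mod 2 boundary of a set `F` of edges of the multigraph in which the edge with label `i`
has endpoints `f i`: the indicator of the vertices of odd degree in `F`. A `T`-join is an edge set
with boundary the indicator of `T`, and a set `T` of vertices is encoded by its indicator. -/
def boundary (f : ι → Sym2 V) (F : Finset ι) : V → ZMod 2 :=
  ∑ i ∈ F, endpointSum (f i)

lemma endpointSum_mk (u v : V) :
    endpointSum s(u, v) = Pi.single u 1 + Pi.single v 1 := rfl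

@[simp]
lemma endpointSum_diag (v : V) : endpointSum s(v, v) = 0 :=
  ZModModule.add_self _

lemma endpointSum_add_endpointSum (u v w : V) :
    endpointSum s(u, v) + endpointSum s(v, w) = endpointSum s(u, w) := by
  have h := ZModModule.add_self (Pi.single v 1 : V → ZMod 2)
  simp only [endpointSum_mk]
  linear_combination h

lemma zmodTwo_eq_zero {x : ZMod 2} (hx : x ≠ 1) : x = 0 :=
  not_imp_comm.1 (Fin.eq_one_of_ne_zero x) hx

lemma endpointSum_apply_eq_zero {e : Sym2 V} {v : V} (hv : v ∉ e) : endpointSum e v = 0 := by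
  induction e with
  | _ u w =>
    simp_all [endpointSum_mk, Sym2.mem_iff]

variable (f : ι → Sym2 V)

@[simp]
lemma boundary_empty : boundary f ∅ = 0 := rfl

@[simp]
lemma boundary_singleton (i : ι) : boundary f {i} = endpointSum (f i) :=
  sum_singleton _ _

lemma boundary_symmDiff [DecidableEq ι] (A B : Finset ι) :
    boundary f (A ∆ B) = boundary f A + boundary f B := by
  have hA := sum_inter_add_sum_sdiff A B (fun i => endpointSum (f i))
  have hB := sum_inter_add_sum_sdiff B A (fun i => endpointSum (f i))
  rw [boundary, symmDiff_def, sup_eq_union, sum_union disjoint_sdiff_sdiff, boundary, boundary,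
    ← hA, ← hB, inter_comm B A, add_add_add_comm, ZModModule.add_self, zero_add]

lemma boundary_sdiff [DecidableEq ι] {A B : Finset ι} (h : B ⊆ A) :
    boundary f (A \ B) = boundary f A + boundary f B := by
  rw [← symmDiff_of_ge h, boundary_symmDiff]

lemma boundary_erase [DecidableEq ι] {A : Finset ι} {i : ι} (h : i ∈ A) :
    boundary f (A.erase i) = boundary f A + endpointSum (f i) := by
  rw [← sdiff_singleton_eq_erase, boundary_sdiff f (singleton_subset_iff.2 h), boundary_singleton]

lemma boundary_insert [DecidableEq ι] {A : Finset ι} {i : ι} (h : i ∉ A) :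
    boundary f (insert i A) = boundary f A + endpointSum (f i) := by
  rw [boundary, sum_insert h, add_comm, boundary]

lemma boundary_apply_eq_zero {F : Finset ι} {v : V} (hv : ∀ i ∈ F, v ∉ f i) :
    boundary f F v = 0 := by
  rw [boundary, Finset.sum_apply]
  exact sum_eq_zero fun i hi => endpointSum_apply_eq_zero (hv i hi)

end Boundary

section Trail

variable {f : ι → Sym2 V} {G : SimpleGraph V}

/-- `P` is a set of edges that the walk `w` traverses once each: `w` has as many steps as `P` has
edges, visits all their endpoints, and `P` has the boundary that a trail from `u` to `v` has. -/
structure Traces (f : ι → Sym2 V) {u v : V} (w : G.Walk u v) (P : Finset ι) : Prop where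
  length_eq : w.length = #P
  boundary_eq : boundary f P = endpointSum s(u, v)
  mem_support : ∀ i ∈ P, ∀ y ∈ f i, y ∈ w.support

lemma Traces.nil (v : V) : Traces f (Walk.nil : G.Walk v v) ∅ :=
  ⟨rfl, by rw [boundary_empty, endpointSum_diag], by simp⟩

lemma Traces.cons [DecidableEq ι] {u v z : V} {w : G.Walk v z} {P : Finset ι}
    (h : Traces f w P) {i : ι} (hi : f i = s(u, v)) (hP : i ∉ P) (huv : G.Adj u v) :
    Traces f (w.cons huv) (insert i P) where
  length_eq := by simp [hP, h.length_eq]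
  boundary_eq := by
    rw [boundary_insert f hP, h.boundary_eq, hi, add_comm, endpointSum_add_endpointSum]
  mem_support := by
    intro j hj y hy
    rcases mem_insert.1 hj with rfl | hj
    · rw [hi, Sym2.mem_iff] at hy
      rcases hy with rfl | rfl <;> simp
    · exact List.mem_cons_of_mem _ (h.mem_support j hj y hy)

lemma Traces.splice [DecidableEq ι] {u v y : V} {w : G.Walk u v} {c : G.Walk y y}
    {P Q : Finset ι} (hw : Traces f w P) (hc : Traces f c Q) (hy : y ∈ w.support)
    (hPQ : Disjoint P Q) :
    Traces f ((w.takeUntil y hy).append (c.append (w.dropUntil y hy))) (P ∪ Q) where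
  length_eq := by
    have h := congrArg Walk.length (w.take_spec hy)
    rw [Walk.length_append, hw.length_eq] at h
    rw [Walk.length_append, Walk.length_append, card_union_of_disjoint hPQ, hc.length_eq, ← h]
    ring
  boundary_eq := by
    rw [boundary, sum_union hPQ, ← boundary, ← boundary, hw.boundary_eq, hc.boundary_eq,
      endpointSum_diag, add_zero]
  mem_support := by
    intro i hi z hz
    simp only [Walk.mem_support_append_iff]
    rcases mem_union.1 hi with hi | hi
    · have h := hw.mem_support i hi z hz
      rw [← w.take_spec hy, Walk.mem_support_append_iff] at h
      tauto
    · exact .inr (.inl (hc.mem_support i hi z hz))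

lemma exists_edge_of_boundary_eq_one {F : Finset ι} {u : V} (hu : boundary f F u = 1) :
    ∃ i ∈ F, ∃ v ≠ u, f i = s(u, v) := by
  rw [boundary, Finset.sum_apply] at hu
  obtain ⟨i, hi, hne⟩ := exists_ne_zero_of_sum_ne_zero (hu.trans_ne one_ne_zero)
  obtain ⟨v, hv⟩ := not_not.1 (mt endpointSum_apply_eq_zero hne)
  refine ⟨i, hi, v, ?_, hv⟩
  rintro rfl
  simp [hv, endpointSum_diag] at hne

theorem exists_trail_of_boundary_eq_one {F : Finset ι}
    (hF : ∀ i ∈ F, ¬ (f i).IsDiag → f i ∈ G.edgeSet) {u : V} (hu : boundary f F u = 1) :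
    ∃ v ≠ u, boundary f F v = 1 ∧ ∃ P ⊆ F, ∃ w : G.Walk u v, Traces f w P := by
  classical
  induction F using Finset.strongInduction generalizing u with
  | H F ih =>
  obtain ⟨i, hi, v, hvu, hiv⟩ := exists_edge_of_boundary_eq_one hu
  have huv : G.Adj u v := by simpa [hiv, hvu.symm] using hF i hi
  have herase := boundary_erase f hi
  rw [hiv, endpointSum_mk] at herase
  by_cases hv : boundary f F v = 1
  · refine ⟨v, hvu, hv, {i}, singleton_subset_iff.2 hi,
      Walk.nil.cons huv, (Traces.nil v).cons hiv (notMem_empty i) huv⟩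
  · have hv' : boundary f (F.erase i) v = 1 := by
      simp [herase, hvu, zmodTwo_eq_zero hv]
    obtain ⟨z, hzv, hz, P, hP, w, hw⟩ :=
      ih _ (erase_ssubset hi) (fun j hj => hF j (mem_of_mem_erase hj)) hv'
    have hzu : z ≠ u := by
      rintro rfl
      simp [herase, hu, hzv, ZModModule.add_self] at hz
    refine ⟨z, hzu, by simpa [herase, hzu, hzv] using hz, insert i P,
      insert_subset hi (hP.trans (erase_subset _ _)), w.cons huv,
      hw.cons hiv (fun h => notMem_erase i F (hP h)) huv⟩

lemma Traces.exists_ssuperset {F P : Finset ι} (hF : ∀ i ∈ F, f i ∈ G.edgeSet) {s t y z : V}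
    (hst : boundary f F = endpointSum s(s, t)) {w : G.Walk s t} (hw : Traces f w P) (hP : P ⊆ F)
    (hy : y ∈ w.support) (hz : z ∉ w.support) {i : ι} (hi : i ∈ F) (hiyz : f i = s(y, z)) :
    ∃ Q ⊆ F, P ⊂ Q ∧ ∃ w' : G.Walk s t, Traces f w' Q := by
  classical
  have hzy : z ≠ y := fun h => hz (h ▸ hy)
  have hiP : i ∉ P := fun h => hz (hw.mem_support i h z (by simp [hiyz]))
  have hyz : G.Adj y z := by simpa [hiyz] using hF i hi
  have hrest : boundary f ((F \ P).erase i) = endpointSum s(y, z) := by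
    rw [boundary_erase f (mem_sdiff.2 ⟨hi, hiP⟩), boundary_sdiff f hP, hst, hw.boundary_eq,
      ZModModule.add_self, zero_add, hiyz]
  obtain ⟨v, hvz, hv, Q, hQ, c, hc⟩ := exists_trail_of_boundary_eq_one (G := G) (u := z)
    (fun j hj _ => hF j (mem_sdiff.1 (mem_of_mem_erase hj)).1)
    (by rw [hrest]; simp [endpointSum_mk, hzy])
  obtain rfl : v = y := by
    by_contra hvy
    rw [hrest] at hv
    simp [endpointSum_mk, hvy, hvz] at hv
  have hcycle := hc.cons hiyz (fun h => notMem_erase i _ (hQ h)) hyz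
  have hPQ : Disjoint P (insert i Q) :=
    disjoint_insert_right.2 ⟨hiP, disjoint_right.2 fun j hj => by grind⟩
  exact ⟨P ∪ insert i Q, by grind, by grind, _, hw.splice hcycle hy hPQ⟩

theorem exists_walk_of_boundary_eq {F : Finset ι} (hF : ∀ i ∈ F, f i ∈ G.edgeSet) {s t : V}
    (hst : boundary f F = endpointSum s(s, t)) :
    ∃ w : G.Walk s t, w.length ≤ #F ∧
      ∀ y, (fromEdgeSet (f '' F)).Reachable s y → y ∈ w.support := by
  have hexists : {P | P ⊆ F ∧ ∃ w : G.Walk s t, Traces f w P}.Nonempty := by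
    by_cases hne : s = t
    · subst hne
      exact ⟨∅, empty_subset F, Walk.nil, Traces.nil s⟩
    · obtain ⟨v, hvs, hv, P, hP, w, hw⟩ := exists_trail_of_boundary_eq_one (G := G) (u := s)
        (fun i hi _ => hF i hi) (by rw [hst]; simp [endpointSum_mk, hne])
      obtain rfl : v = t := by
        by_contra hvt
        rw [hst] at hv
        simp [endpointSum_mk, hvt, hvs] at hv
      exact ⟨P, hP, w, hw⟩
  obtain ⟨P, ⟨hP, w, hw⟩, hmax⟩ :=
    (F.powerset.finite_toSet.subset fun P hP => mem_coe.2 (mem_powerset.2 hP.1)).exists_maximal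
      hexists
  refine ⟨w, hw.length_eq.trans_le (card_le_card hP), fun y ⟨p⟩ => ?_⟩
  by_contra hy
  obtain ⟨d, -, hd₁, hd₂⟩ := p.exists_boundary_dart {v | v ∈ w.support} w.start_mem_support hy
  obtain ⟨⟨i, hi, hid⟩, -⟩ := (fromEdgeSet_adj _).1 d.adj
  obtain ⟨Q, hQ, hPQ, w', hw'⟩ := hw.exists_ssuperset hF hst hP hd₁ hd₂ hi hid
  exact hPQ.2 (hmax ⟨hQ, w', hw'⟩ hPQ.1)

end Trail

section Cuts

/-- The edge `e` lies in the cut `δ(S)`. -/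
def Crosses (S : Finset V) (e : Sym2 V) : Prop :=
  ∃ u v, e = s(u, v) ∧ u ∈ S ∧ v ∉ S

noncomputable instance (S : Finset V) : DecidablePred (Crosses S) := Classical.decPred _

omit [DecidableEq V] in
lemma crosses_mk {S : Finset V} {u v : V} : Crosses S s(u, v) ↔ ¬(u ∈ S ↔ v ∈ S) := by
  constructor
  · rintro ⟨a, b, hab, ha, hb⟩
    rcases Sym2.eq_iff.1 hab with ⟨rfl, rfl⟩ | ⟨rfl, rfl⟩ <;> tauto
  · intro h
    by_cases hu : u ∈ S
    · exact ⟨u, v, rfl, hu, by tauto⟩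
    · exact ⟨v, u, Sym2.eq_swap, by tauto, hu⟩

lemma crosses_compl [Fintype V] {S : Finset V} {e : Sym2 V} : Crosses Sᶜ e ↔ Crosses S e := by
  induction e with
  | _ u v => simp only [crosses_mk, mem_compl, not_iff_not]

lemma sum_endpointSum (S : Finset V) (e : Sym2 V) :
    ∑ v ∈ S, endpointSum e v = if Crosses S e then 1 else 0 := by
  induction e with
  | _ u v =>
    by_cases hu : u ∈ S <;> by_cases hv : v ∈ S <;>
      simp [endpointSum_mk, crosses_mk, sum_add_distrib, hu, hv, ZModModule.add_self]

lemma sum_boundary (f : ι → Sym2 V) (F : Finset ι) (S : Finset V) :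
    ∑ v ∈ S, boundary f F v = #{i ∈ F | Crosses S (f i)} := by
  simp only [boundary, Finset.sum_apply]
  rw [sum_comm]
  simp only [sum_endpointSum, sum_boole]

/-- The total weight of the edges of `E` in the cut `δ(S)`. -/
noncomputable def cutWeight (f : ι → Sym2 V) (E : Finset ι) (x : ι → ℝ) (S : Finset V) : ℝ :=
  ∑ i ∈ E with Crosses S (f i), x i

variable {f : ι → Sym2 V} {E : Finset ι} {x : ι → ℝ}

omit [DecidableEq V] in
@[simp]
lemma cutWeight_empty : cutWeight f E x ∅ = 0 := by
  simp [cutWeight, Crosses]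

lemma cutWeight_compl [Fintype V] (S : Finset V) : cutWeight f E x Sᶜ = cutWeight f E x S := by
  simp only [cutWeight, crosses_compl]

lemma cutWeight_sdiff_add_cutWeight_sdiff_le (hx : ∀ i ∈ E, 0 ≤ x i) (A B : Finset V) :
    cutWeight f E x (A \ B) + cutWeight f E x (B \ A) ≤ cutWeight f E x A + cutWeight f E x B := by
  simp only [cutWeight, sum_filter, ← sum_add_distrib]
  refine sum_le_sum fun i hi => ?_
  have := hx i hi
  obtain ⟨⟨u, v⟩, huv : s(u, v) = f i⟩ := Sym2.mk_surjective (f i)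
  simp only [← huv, crosses_mk, mem_sdiff]
  grind

lemma cutWeight_sdiff_add_cutWeight_sdiff_le_of_subset (hx : ∀ i ∈ E, 0 ≤ x i) {A R B : Finset V}
    (hAR : A ⊆ R) (hRB : R ⊆ B) (hE : ∀ i ∈ E, ∀ u ∈ R \ A, ∀ v ∈ B \ R, f i ≠ s(u, v)) :
    cutWeight f E x (R \ A) + cutWeight f E x (B \ R) ≤ cutWeight f E x A + cutWeight f E x B := by
  simp only [cutWeight, sum_filter, ← sum_add_distrib]
  refine sum_le_sum fun i hi => ?_
  have := hx i hi
  obtain ⟨⟨u, v⟩, huv : s(u, v) = f i⟩ := Sym2.mk_surjective (f i)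
  have huv₁ : ¬(u ∈ R \ A ∧ v ∈ B \ R) := fun h => hE i hi u h.1 v h.2 huv.symm
  have huv₂ : ¬(v ∈ R \ A ∧ u ∈ B \ R) := fun h => hE i hi v h.1 u h.2 (huv.symm.trans Sym2.eq_swap)
  clear hE
  simp only [← huv, crosses_mk, mem_sdiff] at *
  grind

end Cuts

section Excess

variable [DecidableEq ι]

/-- The change `#(J ∆ D) - #J` in cardinality caused by flipping the edges of `D`, written as a sum
over `D` so that it is additive in `D`. -/
def excess (J D : Finset ι) : ℤ :=
  ∑ i ∈ D, if i ∈ J then -1 else 1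

lemma card_symmDiff_eq_add_excess (J D : Finset ι) : (#(J ∆ D) : ℤ) = #J + excess J D := by
  have hJ := card_sdiff_add_card_inter J D
  have hD : excess J D = #(D \ J) - #(J ∩ D) := by
    rw [excess, sum_ite, sum_const, sum_const, filter_mem_eq_inter, filter_notMem_eq_sdiff,
      inter_comm D J]
    simp
    ring
  rw [symmDiff_def, sup_eq_union, card_union_of_disjoint disjoint_sdiff_sdiff, hD]
  lia

lemma symmDiff_subset {A B C : Finset ι} (hA : A ⊆ C) (hB : B ⊆ C) : A ∆ B ⊆ C :=
  symmDiff_subset_union.trans (union_subset hA hB)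

lemma excess_sdiff_add_excess (J : Finset ι) {P D : Finset ι} (h : P ⊆ D) :
    excess J (D \ P) + excess J P = excess J D :=
  sum_sdiff h

lemma excess_cast_zmodTwo (J D : Finset ι) : (excess J D : ZMod 2) = #D := by
  rw [excess, Int.cast_sum, card_eq_sum_ones, Nat.cast_sum]
  refine sum_congr rfl fun i _ => ?_
  split_ifs <;> decide

lemma card_symmDiff_singleton_le (A : Finset ι) (i : ι) : #(A ∆ {i}) ≤ #A + 1 := by
  have h := card_symmDiff_eq_add_excess A {i}
  rw [excess, sum_singleton] at h
  split_ifs at h <;> lia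

end Excess

section Join

/-- `J` is a `T`-join in the edge set `E` of minimum cardinality. -/
structure IsMinJoin (f : ι → Sym2 V) (E : Finset ι) (T : V → ZMod 2) (J : Finset ι) : Prop where
  subset : J ⊆ E
  boundary_eq : boundary f J = T
  card_le : ∀ K ⊆ E, boundary f K = T → #J ≤ #K

/-- `J` is a `T ∆ {u, v}`-join in the edge set `E`, of minimum cardinality among the
`T ∆ {u', v'}`-joins for all pairs `u'`, `v'`. This is the extremal object of Sebő's proof of the
minimax theorem for joins. -/
structure IsMinNearJoin (f : ι → Sym2 V) (E : Finset ι) (T : V → ZMod 2) (u v : V)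
    (J : Finset ι) : Prop where
  subset : J ⊆ E
  boundary_eq : boundary f J = T + endpointSum s(u, v)
  card_le : ∀ K ⊆ E, ∀ e, boundary f K = T + endpointSum e → #J ≤ #K

/-- The vertices joined to `v` by an edge of `E`. -/
def IsNeighbor (f : ι → Sym2 V) (E : Finset ι) (v w : V) : Prop :=
  ∃ i ∈ E, f i = s(v, w)

/-- The edges of `E` that are not incident with `v`. -/
def edgesAvoiding (f : ι → Sym2 V) (E : Finset ι) (v : V) : Finset ι :=
  {i ∈ E | v ∉ f i}

variable {f : ι → Sym2 V} {E J M : Finset ι} {T : V → ZMod 2} {u v : V}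

lemma edgesAvoiding_subset : edgesAvoiding f E v ⊆ E := filter_subset _ _

lemma boundary_apply_eq_zero_of_subset_edgesAvoiding {F : Finset ι} (hF : F ⊆ edgesAvoiding f E v) :
    boundary f F v = 0 :=
  boundary_apply_eq_zero f fun _ hi => (mem_filter.1 (hF hi)).2

lemma exists_isMinJoin (hT : ∃ J ⊆ E, boundary f J = T) : ∃ J, IsMinJoin f E T J := by
  classical
  obtain ⟨J, hJ, hmin⟩ := exists_min_image {J ∈ E.powerset | boundary f J = T} card
    (by simpa [Finset.Nonempty] using hT)
  simp only [mem_filter, mem_powerset, and_imp] at hJ hmin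
  exact ⟨J, hJ.1, hJ.2, hmin⟩

lemma IsMinJoin.exists_isMinNearJoin (hM : IsMinJoin f E T M) (hT : T ≠ 0) :
    ∃ u v J, IsMinNearJoin f E T u v J ∧ #J < #M := by
  classical
  obtain ⟨i, hi⟩ : M.Nonempty := by
    rw [nonempty_iff_ne_empty]
    rintro rfl
    exact hT hM.boundary_eq.symm
  have hmem : M.erase i ∈ {K ∈ E.powerset | ∃ e, boundary f K = T + endpointSum e} :=
    mem_filter.2 ⟨mem_powerset.2 ((erase_subset _ _).trans hM.subset), f i,
      by rw [boundary_erase f hi, hM.boundary_eq]⟩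
  obtain ⟨J, hJ, hmin⟩ := exists_min_image _ card ⟨_, hmem⟩
  have hlt := (hmin _ hmem).trans_lt (card_erase_lt_of_mem hi)
  simp only [mem_filter, mem_powerset, and_imp] at hJ hmin
  obtain ⟨hJE, e, he⟩ := hJ
  induction e with
  | _ u v => exact ⟨u, v, J, ⟨hJE, he, fun K hK e he => hmin K hK ⟨e, he⟩⟩, hlt⟩

lemma IsMinNearJoin.subset_edgesAvoiding (hJ : IsMinNearJoin f E T u v J) :
    J ⊆ edgesAvoiding f E v := by
  classical
  refine fun i hi => mem_filter.2 ⟨hJ.subset hi, fun ⟨w, hw⟩ => ?_⟩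
  have herase : boundary f (J.erase i) = T + endpointSum s(u, w) := by
    rw [boundary_erase f hi, hJ.boundary_eq, hw, add_assoc, endpointSum_add_endpointSum]
  exact (card_erase_lt_of_mem hi).not_ge
    (hJ.card_le _ ((erase_subset _ _).trans hJ.subset) _ herase)

lemma IsMinNearJoin.ne (hJ : IsMinNearJoin f E T u v J) (hM : IsMinJoin f E T M)
    (hlt : #J < #M) : u ≠ v := by
  rintro rfl
  refine hlt.not_ge (hM.card_le J hJ.subset ?_)
  rw [hJ.boundary_eq, endpointSum_diag, add_zero]

lemma IsMinNearJoin.apply_eq_one (hJ : IsMinNearJoin f E T u v J) (huv : u ≠ v) : T v = 1 := by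
  have hv := boundary_apply_eq_zero_of_subset_edgesAvoiding hJ.subset_edgesAvoiding
  rw [hJ.boundary_eq] at hv
  simpa [endpointSum_mk, huv.symm, CharTwo.add_eq_zero] using hv

lemma IsMinNearJoin.neg_one_le_excess [DecidableEq ι] (hJ : IsMinNearJoin f E T u v J)
    {w w' : V} (hw : IsNeighbor f E v w) {Q : Finset ι} (hQ : Q ⊆ E)
    (hww' : boundary f Q = endpointSum s(w, w')) : -1 ≤ excess J Q := by
  obtain ⟨i, hi, hiw⟩ := hw
  have hboundary : boundary f ((J ∆ Q) ∆ {i}) = T + endpointSum s(u, w') := by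
    rw [boundary_symmDiff, boundary_symmDiff, boundary_singleton, hJ.boundary_eq, hww', hiw]
    linear_combination endpointSum_add_endpointSum u v w + endpointSum_add_endpointSum u w w'
  have hmin := hJ.card_le _
    (symmDiff_subset (symmDiff_subset hJ.subset hQ) (singleton_subset_iff.2 hi)) _ hboundary
  have hle := card_symmDiff_singleton_le (J ∆ Q) i
  have hexcess := card_symmDiff_eq_add_excess J Q
  lia

lemma IsMinJoin.card_le_add_excess_add_one [DecidableEq ι] (hM : IsMinJoin f E T M)
    (hJ : IsMinNearJoin f E T u v J) {w : V} (hw : IsNeighbor f E v w) {P : Finset ι} (hP : P ⊆ E)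
    (huw : boundary f P = endpointSum s(u, w)) : (#M : ℤ) ≤ #J + excess J P + 1 := by
  obtain ⟨i, hi, hiw⟩ := hw
  have hboundary : boundary f ((J ∆ P) ∆ {i}) = T := by
    rw [boundary_symmDiff, boundary_symmDiff, boundary_singleton, hJ.boundary_eq, huw, hiw]
    linear_combination endpointSum_add_endpointSum u v w +
      ZModModule.add_self (endpointSum s(u, w))
  have hmin := hM.card_le _
    (symmDiff_subset (symmDiff_subset hJ.subset hP) (singleton_subset_iff.2 hi)) hboundary
  have hle := card_symmDiff_singleton_le (J ∆ P) i
  have hexcess := card_symmDiff_eq_add_excess J P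
  lia

variable {c : V → ZMod 2}

lemma cast_card_eq_sum_mul_boundary [Fintype V] {F : Finset ι}
    (hc : ∀ i ∈ F, (f i).map c = s(0, 1)) :
    (#F : ZMod 2) = ∑ y, c y * boundary f F y := by
  have hedge : ∀ i ∈ F, ∑ y, c y * endpointSum (f i) y = 1 := by
    intro i hi
    have h := hc i hi
    generalize f i = e at h ⊢
    induction e with
    | _ a b =>
      rw [Sym2.map_mk, Sym2.eq_iff] at h
      rcases h with ⟨ha, hb⟩ | ⟨ha, hb⟩ <;>
        simp [endpointSum_mk, mul_add, sum_add_distrib, Pi.single_apply, ha, hb]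
  simp only [boundary, Finset.sum_apply, mul_sum]
  rw [sum_comm, sum_congr rfl hedge]
  simp

omit [DecidableEq V] in
lemma IsNeighbor.color_eq (hc : ∀ i ∈ E, (f i).map c = s(0, 1)) {w : V}
    (hw : IsNeighbor f E v w) : c w = c v + 1 := by
  obtain ⟨i, hi, hiw⟩ := hw
  have h := hc i hi
  rw [hiw, Sym2.map_mk, Sym2.eq_iff] at h
  rcases h with ⟨hv, hw⟩ | ⟨hv, hw⟩ <;> simp [hv, hw, CharTwo.add_self_eq_zero]

variable [Finite V]

lemma IsMinNearJoin.excess_nonneg_of_boundary_eq [DecidableEq ι]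
    (hc : ∀ i ∈ E, (f i).map c = s(0, 1)) (hJ : IsMinNearJoin f E T u v J) {w w' : V}
    (hw : IsNeighbor f E v w) (hw' : IsNeighbor f E v w') {Q : Finset ι} (hQ : Q ⊆ E)
    (hww' : boundary f Q = endpointSum s(w, w')) : 0 ≤ excess J Q := by
  have := Fintype.ofFinite V
  have heven : (excess J Q : ZMod 2) = 0 := by
    rw [excess_cast_zmodTwo, cast_card_eq_sum_mul_boundary fun i hi => hc i (hQ hi), hww']
    simp [endpointSum_mk, mul_add, sum_add_distrib, Pi.single_apply, hw.color_eq hc,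
      hw'.color_eq hc, ZModModule.add_self]
  have := hJ.neg_one_le_excess hw hQ hww'
  have := (ZMod.intCast_zmod_eq_zero_iff_dvd _ 2).1 heven
  lia

lemma IsMinNearJoin.excess_nonneg [DecidableEq ι] (hc : ∀ i ∈ E, (f i).map c = s(0, 1))
    (hJ : IsMinNearJoin f E T u v J) {D : Finset ι} (hD : D ⊆ E)
    (hodd : ∀ y, boundary f D y = 1 → IsNeighbor f E v y) : 0 ≤ excess J D := by
  induction D using Finset.strongInduction with
  | H D ih =>
  by_cases hzero : boundary f D = 0
  · have hmin := hJ.card_le (J ∆ D) (symmDiff_subset hJ.subset hD) s(u, v)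
      (by rw [boundary_symmDiff, hzero, add_zero, hJ.boundary_eq])
    have hexcess := card_symmDiff_eq_add_excess J D
    lia
  obtain ⟨w, hw⟩ := Function.ne_iff.1 hzero
  replace hw : boundary f D w = 1 := Fin.eq_one_of_ne_zero _ hw
  obtain ⟨w', hne, hw', P, hPD, p, hp⟩ :=
    exists_trail_of_boundary_eq_one (G := ⊤) (fun i _ hi => by simpa using hi) hw
  have hP : P.Nonempty := by
    rw [nonempty_iff_ne_empty]
    rintro rfl
    have h := congrFun hp.boundary_eq w
    simp [endpointSum_mk, hne.symm] at h
  have hrest := ih (D \ P) (sdiff_ssubset hPD hP) (sdiff_subset.trans hD) fun y hy => by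
    rw [boundary_sdiff f hPD, hp.boundary_eq] at hy
    by_cases hyw : y = w
    · exact hyw ▸ hodd w hw
    by_cases hyw' : y = w'
    · exact hyw' ▸ hodd w' hw'
    exact hodd y (by simpa [endpointSum_mk, hyw, hyw'] using hy)
  have hpath := hJ.excess_nonneg_of_boundary_eq hc (hodd w hw) (hodd w' hw') (hPD.trans hD)
    hp.boundary_eq
  rw [← excess_sdiff_add_excess J hPD]
  exact add_nonneg hrest hpath

omit [Finite V] in
lemma exists_subset_boundary_eq_endpointSum [DecidableEq ι] {N : V → Prop} {D : Finset ι}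
    (hu : N u ∨ boundary f D u = 1) (hD : ∀ y ≠ u, boundary f D y = 1 → N y) :
    ∃ P ⊆ D, ∃ w, N w ∧ boundary f P = endpointSum s(u, w) ∧
      ∀ y, boundary f (D \ P) y = 1 → N y := by
  by_cases hNu : N u
  · refine ⟨∅, empty_subset D, u, hNu, by rw [boundary_empty, endpointSum_diag], fun y hy => ?_⟩
    rw [sdiff_empty] at hy
    by_cases hyu : y = u
    · exact hyu ▸ hNu
    · exact hD y hyu hy
  · replace hu := hu.resolve_left hNu
    obtain ⟨w, hwu, hw, P, hPD, p, hp⟩ :=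
      exists_trail_of_boundary_eq_one (G := ⊤) (fun i _ hi => by simpa using hi) hu
    refine ⟨P, hPD, w, hD w hwu hw, hp.boundary_eq, fun y hy => ?_⟩
    rw [boundary_sdiff f hPD, hp.boundary_eq] at hy
    by_cases hyw : y = w
    · exact hyw ▸ hD w hwu hw
    · have hyu : y ≠ u := by
        rintro rfl
        simp [endpointSum_mk, hu, hyw, ZModModule.add_self] at hy
      exact hD y hyu (by simpa [endpointSum_mk, hyw, hyu] using hy)

theorem IsMinJoin.card_le_card_add_one (hc : ∀ i ∈ E, (f i).map c = s(0, 1))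
    (hM : IsMinJoin f E T M) (hJ : IsMinNearJoin f E T u v J) (huv : u ≠ v) {K : Finset ι}
    (hK : K ⊆ edgesAvoiding f E v)
    (hKT : ∀ y ≠ v, ¬IsNeighbor f E v y → boundary f K y = T y) : #M ≤ #K + 1 := by
  classical
  have hDE : J ∆ K ⊆ edgesAvoiding f E v := symmDiff_subset hJ.subset_edgesAvoiding hK
  have hdiff : ∀ y ≠ v, ¬IsNeighbor f E v y →
      boundary f (J ∆ K) y = endpointSum s(u, v) y := by
    intro y hyv hy
    rw [boundary_symmDiff, Pi.add_apply, hKT y hyv hy, hJ.boundary_eq, Pi.add_apply,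
      add_right_comm, ZModModule.add_self, zero_add]
  obtain ⟨P, hPD, w, hw, huw, hrest⟩ := exists_subset_boundary_eq_endpointSum (f := f) (u := u)
      (D := J ∆ K) (N := IsNeighbor f E v)
      (or_iff_not_imp_left.2 fun hu => by simp [hdiff u huv hu, endpointSum_mk, huv]) (by
        intro y hyu hy
        by_contra hyN
        have hyv : y ≠ v := by
          rintro rfl
          simp [boundary_apply_eq_zero_of_subset_edgesAvoiding hDE] at hy
        simp [hdiff y hyv hyN, endpointSum_mk, hyu, hyv] at hy)
  have hDE' := hDE.trans edgesAvoiding_subset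
  have hpath := hM.card_le_add_excess_add_one hJ hw (hPD.trans hDE') huw
  have hnonneg := hJ.excess_nonneg hc (sdiff_subset.trans hDE') hrest
  have hcard := card_symmDiff_eq_add_excess J (J ∆ K)
  rw [symmDiff_symmDiff_cancel_left, ← excess_sdiff_add_excess J hPD] at hcard
  lia

end Join

section Contraction

variable {W : Type*} [DecidableEq W]

/-- The sum of `g` over the fibres of `π`; the odd set of a graph whose vertices are identified
along `π` is obtained in this way. -/
def fiberSum [Fintype V] (π : V → W) (g : V → ZMod 2) (y : W) : ZMod 2 :=
  ∑ z with π z = y, g z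

omit [DecidableEq V] in
lemma sum_fiberSum [Fintype V] (π : V → W) (g : V → ZMod 2) (S : Finset W) :
    ∑ y ∈ S, fiberSum π g y = ∑ z with π z ∈ S, g z :=
  sum_fiberwise_eq_sum_filter _ _ _ _

lemma boundary_map [Fintype V] (π : V → W) (f : ι → Sym2 V) (F : Finset ι) :
    boundary (fun i => (f i).map π) F = fiberSum π (boundary f F) := by
  ext y
  simp only [fiberSum, boundary, Finset.sum_apply]
  rw [sum_comm]
  refine sum_congr rfl fun i _ => ?_
  induction f i with
  | _ a b =>
    simp [endpointSum_mk, Pi.single_apply, sum_add_distrib, eq_comm]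

omit [DecidableEq V] in
lemma crosses_map [Fintype V] {π : V → W} {S : Finset W} {e : Sym2 V} :
    Crosses S (e.map π) ↔ Crosses ({z | π z ∈ S} : Finset V) e := by
  induction e with
  | _ a b => simp [crosses_mk]

open Classical in
/-- The map that contracts a vertex and all its neighbours to that vertex. -/
noncomputable def contract (f : ι → Sym2 V) (E : Finset ι) (v y : V) : V :=
  if IsNeighbor f E v y then v else y

variable {f : ι → Sym2 V} {E : Finset ι} {v : V}

omit [DecidableEq V] in
lemma contract_self : contract f E v v = v := ite_self _

omit [DecidableEq V] in
lemma contract_eq_iff {y z : V} (hy : y ≠ v) (hyN : ¬IsNeighbor f E v y) :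
    contract f E v z = y ↔ z = y := by
  rw [contract]
  split_ifs with hz
  · exact ⟨fun h => absurd h.symm hy, fun h => absurd (h ▸ hz) hyN⟩
  · rfl

omit [DecidableEq V] in
lemma map_contract_eq_of_mem {i : ι} (hi : i ∈ E) (hv : v ∈ f i) :
    (f i).map (contract f E v) = s(v, v) := by
  obtain ⟨w, hw⟩ := hv
  rw [hw, Sym2.map_mk, contract_self, contract, if_pos ⟨i, hi, hw⟩]

lemma boundary_edgesAvoiding_inter_map_contract [DecidableEq ι] {M : Finset ι} (hM : M ⊆ E) :
    boundary (fun i => (f i).map (contract f E v)) (edgesAvoiding f E v ∩ M) =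
      boundary (fun i => (f i).map (contract f E v)) M := by
  refine sum_subset inter_subset_right fun i hi hiM => ?_
  have hv : v ∈ f i := by simp_all [edgesAvoiding, @hM i]
  simp only [map_contract_eq_of_mem (hM hi) hv, endpointSum_diag]

lemma fiberSum_contract_apply [Fintype V] {g : V → ZMod 2} {y : V} (hy : y ≠ v)
    (hyN : ¬IsNeighbor f E v y) : fiberSum (contract f E v) g y = g y := by
  rw [fiberSum, sum_filter]
  simp only [contract_eq_iff hy hyN, sum_ite_eq', mem_univ, if_true]

lemma cutWeight_map_contract [Fintype V] (x : ι → ℝ) (S : Finset V) :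
    cutWeight (fun i => (f i).map (contract f E v)) (edgesAvoiding f E v) x S =
      cutWeight f E x {z | contract f E v z ∈ S} := by
  refine sum_congr (Finset.ext fun i => ?_) fun _ _ => rfl
  simp only [edgesAvoiding, mem_filter, and_assoc, ← crosses_map]
  refine and_congr_right fun hi => and_iff_right_of_imp fun h hv => ?_
  rw [map_contract_eq_of_mem hi hv, crosses_mk] at h
  exact h Iff.rfl

lemma map_contract_color {c : V → ZMod 2} (hc : ∀ i ∈ E, (f i).map c = s(0, 1)) {i : ι}
    (hi : i ∈ edgesAvoiding f E v) :
    ((f i).map (contract f E v)).map (Function.update c v (c v + 1)) = s(0, 1) := by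
  obtain ⟨hiE, hv⟩ := mem_filter.1 hi
  rw [Sym2.map_map, ← hc i hiE]
  refine Sym2.map_congr fun y hy => ?_
  have hyv : y ≠ v := fun h => hv (h ▸ hy)
  by_cases hyN : IsNeighbor f E v y
  · simp [contract, hyN, hyN.color_eq hc]
  · simp [contract, hyN, hyv]

lemma cutWeight_singleton_add_sum_edgesAvoiding_le {x : ι → ℝ} (hx : ∀ i ∈ E, 0 ≤ x i) (v : V) :
    cutWeight f E x {v} + ∑ i ∈ edgesAvoiding f E v, x i ≤ ∑ i ∈ E, x i := by
  rw [← sum_filter_add_sum_filter_not E (v ∈ f ·) x, edgesAvoiding]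
  gcongr
  refine sum_le_sum_of_subset_of_nonneg (monotone_filter_right E fun i _ => ?_)
    fun i hi _ => hx i (mem_filter.1 hi).1
  rintro ⟨a, b, hab, ha, -⟩
  rw [hab, ← mem_singleton.1 ha]
  exact Sym2.mem_mk_left a b

end Contraction

theorem exists_join_card_le_of_bipartite [Finite V] {f : ι → Sym2 V} {E : Finset ι}
    {T c : V → ZMod 2} {x : ι → ℝ} (hx : ∀ i ∈ E, 0 ≤ x i) (hc : ∀ i ∈ E, (f i).map c = s(0, 1))
    (hT : ∃ J ⊆ E, boundary f J = T) (hcut : ∀ S, ∑ v ∈ S, T v = 1 → 1 ≤ cutWeight f E x S) :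
    ∃ J ⊆ E, boundary f J = T ∧ #J ≤ ∑ i ∈ E, x i := by
  classical
  have := Fintype.ofFinite V
  induction E using Finset.strongInduction generalizing f T c with
  | H E ih =>
  obtain ⟨M, hM⟩ := exists_isMinJoin hT
  refine ⟨M, hM.subset, hM.boundary_eq, ?_⟩
  by_cases hzero : T = 0
  · have hempty := hM.card_le ∅ (empty_subset E) (by rw [boundary_empty, hzero])
    rw [card_empty, Nat.le_zero] at hempty
    simpa [hempty] using sum_nonneg hx
  obtain ⟨u, v, J, hJ, hlt⟩ := hM.exists_isMinNearJoin hzero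
  have huv := hJ.ne hM hlt
  have hTv := hJ.apply_eq_one huv
  set E' := edgesAvoiding f E v
  have hssub : E' ⊂ E := by
    obtain ⟨i, hi, w, -, hw⟩ := exists_edge_of_boundary_eq_one (hM.boundary_eq ▸ hTv)
    exact filter_ssubset.2 ⟨i, hM.subset hi, by simp [hw]⟩
  obtain ⟨K, hK, hKT, hKcard⟩ := ih E' hssub (f := fun i => (f i).map (contract f E v))
    (T := fiberSum (contract f E v) T) (c := Function.update c v (c v + 1))
    (fun i hi => hx i (hssub.1 hi)) (fun i hi => map_contract_color hc hi)
    ⟨E' ∩ M, inter_subset_left, by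
      rw [boundary_edgesAvoiding_inter_map_contract hM.subset, boundary_map, hM.boundary_eq]⟩
    (fun S hS => by
      rw [cutWeight_map_contract]
      exact hcut _ (by rwa [← sum_fiberSum]))
  have hMK : #M ≤ #K + 1 := hM.card_le_card_add_one hc hJ huv hK fun y hyv hyN => by
    have h := congrFun hKT y
    rwa [boundary_map, fiberSum_contract_apply hyv hyN, fiberSum_contract_apply hyv hyN] at h
  have hv : 1 ≤ cutWeight f E x {v} := hcut {v} (by simpa using hTv)
  calc (#M : ℝ) ≤ 1 + ∑ i ∈ E', x i := by
        have : (#M : ℝ) ≤ #K + 1 := mod_cast hMK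
        linarith
    _ ≤ cutWeight f E x {v} + ∑ i ∈ E', x i := by gcongr
    _ ≤ ∑ i ∈ E, x i := cutWeight_singleton_add_sum_edgesAvoiding_le hx v

section Subdivision

/-- The subdivision of the multigraph in which the edge `i` joins `a i` and `b i`: its midpoint is
the new vertex `Sum.inr i`, and the two halves are labelled `(i, false)` and `(i, true)`. -/
def subdivide (a b : ι → V) (p : ι × Bool) : Sym2 (V ⊕ ι) :=
  s(Sum.inr p.1, Sum.inl (bif p.2 then b p.1 else a p.1))

lemma boundary_subdivide_product [DecidableEq ι] (a b : ι → V) (F : Finset ι) :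
    boundary (subdivide a b) (F ×ˢ univ) = Sum.elim (boundary (fun i => s(a i, b i)) F) 0 := by
  simp only [boundary, sum_product, Fintype.sum_bool]
  ext (v | i)
  · simp [subdivide, endpointSum_mk, Pi.single_apply, add_comm]
  · simp [subdivide, endpointSum_mk, Pi.single_apply, ZModModule.add_self]

lemma boundary_subdivide_inr [DecidableEq ι] (a b : ι → V) (J : Finset (ι × Bool)) (i : ι) :
    boundary (subdivide a b) J (Sum.inr i) =
      (if (i, true) ∈ J then 1 else 0) + if (i, false) ∈ J then 1 else 0 := by
  have hedge : ∀ p : ι × Bool, endpointSum (subdivide a b p) (Sum.inr i) =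
      (if p = (i, true) then 1 else 0) + if p = (i, false) then 1 else 0 := by
    rintro ⟨j, _ | _⟩ <;> simp [subdivide, endpointSum_mk, Pi.single_apply, eq_comm]
  simp only [boundary, Finset.sum_apply, hedge, sum_add_distrib, sum_ite_eq']

lemma exists_eq_product_of_boundary_subdivide [DecidableEq ι] {a b : ι → V}
    {J : Finset (ι × Bool)} (hJ : ∀ i, boundary (subdivide a b) J (Sum.inr i) = 0) :
    ∃ K : Finset ι, J = K ×ˢ univ := by
  refine ⟨J.image Prod.fst, Finset.ext fun ⟨i, β⟩ => ?_⟩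
  have hi := hJ i
  rw [boundary_subdivide_inr] at hi
  by_cases htrue : (i, true) ∈ J <;> by_cases hfalse : (i, false) ∈ J <;> cases β <;>
    simp_all

omit [DecidableEq V] in
lemma cutWeight_toLeft_le_cutWeight_subdivide {a b : ι → V} {E : Finset ι} {x : ι → ℝ}
    (hx : ∀ i ∈ E, 0 ≤ x i) (S : Finset (V ⊕ ι)) :
    cutWeight (fun i => s(a i, b i)) E x S.toLeft ≤
      cutWeight (subdivide a b) (E ×ˢ univ) (fun p => x p.1) S := by
  simp only [cutWeight, sum_filter, sum_product, Fintype.sum_bool]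
  refine sum_le_sum fun i hi => ?_
  have hi := hx i hi
  have hcross : Crosses S.toLeft s(a i, b i) →
      Crosses S (subdivide a b (i, true)) ∨ Crosses S (subdivide a b (i, false)) := by
    simp only [subdivide, crosses_mk, mem_toLeft, cond_true, cond_false]
    tauto
  split_ifs <;> first | linarith | tauto

end Subdivision

theorem exists_join_card_le [Finite V] [Finite ι] {f : ι → Sym2 V} {E : Finset ι} {T : V → ZMod 2}
    {x : ι → ℝ} (hx : ∀ i ∈ E, 0 ≤ x i) (hT : ∃ J ⊆ E, boundary f J = T)
    (hcut : ∀ S, ∑ v ∈ S, T v = 1 → 2 ≤ cutWeight f E x S) :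
    ∃ J ⊆ E, boundary f J = T ∧ #J ≤ (∑ i ∈ E, x i) / 2 := by
  classical
  choose e he using fun i => Sym2.mk_surjective (f i)
  obtain rfl : f = fun i => s((e i).1, (e i).2) := funext fun i => (he i).symm
  set a := fun i => (e i).1
  set b := fun i => (e i).2
  have hx' : ∀ i ∈ E, 0 ≤ x i / 2 := fun i hi => div_nonneg (hx i hi) zero_le_two
  obtain ⟨J₀, hJ₀, hJ₀T⟩ := hT
  obtain ⟨J, hJE, hJT, hJcard⟩ := exists_join_card_le_of_bipartite (f := subdivide a b)
    (E := E ×ˢ univ) (T := Sum.elim T 0) (c := Sum.elim 0 1) (x := fun p => x p.1 / 2)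
    (fun p hp => hx' p.1 (mem_product.1 hp).1)
    (fun p _ => Sym2.eq_swap)
    ⟨J₀ ×ˢ univ, product_subset_product_left hJ₀, by rw [boundary_subdivide_product, hJ₀T]⟩
    (fun S hS => by
      have hodd : ∑ v ∈ S.toLeft, T v = 1 := by
        rw [← hS, ← toLeft_disjSum_toRight (u := S), sum_disjSum]
        simp
      refine le_trans ?_ (cutWeight_toLeft_le_cutWeight_subdivide hx' S)
      have := hcut _ hodd
      rw [cutWeight] at this ⊢
      rw [← sum_div]
      linarith)
  obtain ⟨K, rfl⟩ := exists_eq_product_of_boundary_subdivide (J := J) fun i =>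
    congrFun hJT (Sum.inr i)
  refine ⟨K, ?_, ?_, ?_⟩
  · exact fun i hi => (mem_product.1 (hJE (mk_mem_product hi (mem_univ true)))).1
  · rw [boundary_subdivide_product] at hJT
    exact funext fun v => congrFun hJT (Sum.inl v)
  · have hsum : ∑ p ∈ E ×ˢ (univ : Finset Bool), x p.1 / 2 = ∑ i ∈ E, x i := by
      simp only [sum_product, Fintype.sum_bool, add_halves]
    rw [hsum, card_product, card_univ, Fintype.card_bool] at hJcard
    push_cast at hJcard
    linarith

section GaoTree

/-- `F` is the edge set of a tree on `R`, rooted at `s`, in which every nonempty member of the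
family `𝒩` properly inside `R` is crossed exactly once, and the members of `𝒩` are nested with `R`.
These are the intermediate stages in the construction of Gao's spanning tree, where `𝒩` is the
chain of narrow cuts. -/
structure IsGaoTree (f : ι → Sym2 V) (E : Finset ι) (𝒩 : Set (Finset V)) (s : V) (R : Finset V)
    (F : Finset ι) : Prop where
  subset : F ⊆ E
  card_add_one : #F + 1 = #R
  mem_of_mem : ∀ i ∈ F, ∀ v ∈ f i, v ∈ R
  reachable : ∀ v ∈ R, (fromEdgeSet (f '' F)).Reachable s v
  nested : ∀ S ∈ 𝒩, S ⊆ R ∨ R ⊆ S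
  card_crossing : ∀ S ∈ 𝒩, S.Nonempty → S ⊂ R → #{i ∈ F | Crosses S (f i)} = 1

variable {f : ι → Sym2 V} {E F : Finset ι} {𝒩 : Set (Finset V)} {s : V} {R : Finset V}

omit [DecidableEq V] in
lemma IsGaoTree.singleton (h𝒩 : ∀ S ∈ 𝒩, S.Nonempty → s ∈ S) : IsGaoTree f E 𝒩 s {s} ∅ where
  subset := empty_subset E
  card_add_one := rfl
  mem_of_mem := by simp
  reachable v hv := mem_singleton.1 hv ▸ Reachable.rfl
  nested S hS := S.eq_empty_or_nonempty.imp (fun hne => hne.trans_subset (empty_subset _))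
    fun hne => singleton_subset_iff.2 (h𝒩 S hS hne)
  card_crossing S _ hne hSs := absurd (ssubset_singleton_iff.1 hSs) hne.ne_empty

omit [DecidableEq V] in
lemma IsGaoTree.not_crosses (h : IsGaoTree f E 𝒩 s R F) {i : ι} (hi : i ∈ F) :
    ¬Crosses R (f i) := by
  rintro ⟨u, v, huv, -, hv⟩
  exact hv (h.mem_of_mem i hi v (huv ▸ Sym2.mem_mk_right u v))

lemma IsGaoTree.extend [DecidableEq ι] (h : IsGaoTree f E 𝒩 s R F) {i : ι} (hi : i ∈ E) {u v : V}
    (hu : u ∈ R) (hv : v ∉ R) (huv : f i = s(u, v)) (hinner : ∀ S ∈ 𝒩, S ⊂ R → u ∉ S)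
    (houter : ∀ S ∈ 𝒩, R ⊂ S → v ∈ S) : IsGaoTree f E 𝒩 s (insert v R) (insert i F) := by
  have hiF : i ∉ F := fun hiF =>
    hv (h.mem_of_mem i hiF v (huv ▸ Sym2.mem_mk_right u v))
  have hmono : ∀ y ∈ R, (fromEdgeSet (f '' (insert i F : Finset ι))).Reachable s y :=
    fun y hy => (h.reachable y hy).mono
      (fromEdgeSet_mono (Set.image_mono (coe_subset.2 (subset_insert i F))))
  refine ⟨insert_subset hi h.subset, ?_, ?_, ?_, fun S hS => ?_, fun S hS hne hSR => ?_⟩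
  · rw [card_insert_of_notMem hiF, card_insert_of_notMem hv, h.card_add_one]
  · simp only [forall_mem_insert, huv, Sym2.mem_iff, forall_eq_or_imp, forall_eq]
    exact ⟨⟨mem_insert_of_mem hu, mem_insert_self v R⟩,
      fun j hj y hy => mem_insert_of_mem (h.mem_of_mem j hj y hy)⟩
  · refine (forall_mem_insert _ _ _).2 ⟨(hmono u hu).trans (Adj.reachable ?_), hmono⟩
    exact (fromEdgeSet_adj _).2
      ⟨⟨i, mem_coe.2 (mem_insert_self i F), huv⟩, ne_of_mem_of_not_mem hu hv⟩
  · rcases h.nested S hS with hSR | hRS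
    · exact .inl (hSR.trans (subset_insert v R))
    rcases hRS.eq_or_ssubset with rfl | hRS
    · exact .inl (subset_insert v R)
    · exact .inr (insert_subset (houter S hS hRS) hRS.1)
  · rw [filter_insert]
    obtain rfl | hSR' := eq_or_ne S R
    · rw [if_pos (huv ▸ ⟨u, v, rfl, hu, hv⟩), filter_false_of_mem fun j hj => h.not_crosses hj]
      rfl
    have hlt : S ⊂ R := by
      refine ((h.nested S hS).resolve_right fun hRS => hSR.2 ?_).ssubset_of_ne hSR'
      exact insert_subset (houter S hS (hRS.ssubset_of_ne hSR'.symm)) hRS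
    have hcross : ¬Crosses S (f i) := by
      simp only [huv, crosses_mk, hinner S hS hlt, mt (@hlt.1 v) hv, iff_self, not_true,
        not_false_iff]
    rw [if_neg hcross, h.card_crossing S hS hne hlt]

omit [DecidableEq V] in
theorem exists_isGaoTree_univ [Fintype V] (h𝒩 : ∀ S ∈ 𝒩, S.Nonempty → s ∈ S)
    (hgrow : ∀ R : Finset V, R.Nonempty → R ≠ univ → (∀ S ∈ 𝒩, S ⊆ R ∨ R ⊆ S) →
      ∃ i ∈ E, ∃ u ∈ R, ∃ v ∉ R, f i = s(u, v) ∧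
        (∀ S ∈ 𝒩, S ⊂ R → u ∉ S) ∧ ∀ S ∈ 𝒩, R ⊂ S → v ∈ S) :
    ∃ F, IsGaoTree f E 𝒩 s univ F := by
  classical
  obtain ⟨R, ⟨F, hF⟩, hmax⟩ := exists_maximal_of_wellFoundedGT
    (fun R => ∃ F, IsGaoTree f E 𝒩 s R F) ⟨{s}, ∅, .singleton h𝒩⟩
  obtain rfl | hR := eq_or_ne R univ
  · exact ⟨F, hF⟩
  have hne : R.Nonempty := card_pos.1 (hF.card_add_one ▸ Nat.succ_pos _)
  obtain ⟨i, hi, u, hu, v, hv, huv, hinner, houter⟩ := hgrow R hne hR hF.nested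
  have hle := hmax ⟨_, hF.extend hi hu hv huv hinner houter⟩ (subset_insert v R)
  exact absurd (hle (mem_insert_self v R)) hv

end GaoTree

section Relaxation

/-- Feasibility of the edge weights `x` for the Held-Karp `s`-`t` path relaxation on the multigraph
with edge set `E`. The vertex `v ∉ S` only says that the cut of `S` is nontrivial. -/
structure IsFeasible (f : ι → Sym2 V) (E : Finset ι) (s t : V) (x : ι → ℝ) : Prop where
  nonneg : ∀ i ∈ E, 0 ≤ x i
  one_le : ∀ {S : Finset V} {v : V}, S.Nonempty → v ∉ S → 1 ≤ cutWeight f E x S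
  two_le : ∀ {S : Finset V} {v : V}, S.Nonempty → v ∉ S → (s ∈ S ↔ t ∈ S) → 2 ≤ cutWeight f E x S

/-- The cut of `S` has weight less than `2`, where `S` contains `s` but not `t`, or is trivial. The
trivial sets `∅` and `V` are included as the ends of the chain of narrow cuts. -/
structure IsNarrow (f : ι → Sym2 V) (E : Finset ι) (s t : V) (x : ι → ℝ) (S : Finset V) :
    Prop where
  cutWeight_lt : cutWeight f E x S < 2
  source_mem : S.Nonempty → s ∈ S
  target_notMem : ∀ {v : V}, v ∉ S → t ∉ S

variable {f : ι → Sym2 V} {E F : Finset ι} {s t : V} {x : ι → ℝ}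

omit [DecidableEq V] in
lemma isNarrow_empty : IsNarrow f E s t x ∅ :=
  ⟨by simp, fun h => absurd rfl h.ne_empty, fun _ => notMem_empty t⟩

omit [DecidableEq V] in
lemma cutWeight_eq_zero_of_forall_mem {S : Finset V} (hS : ∀ v, v ∈ S) :
    cutWeight f E x S = 0 := by
  simp [cutWeight, Crosses, hS]

omit [DecidableEq V] in
lemma isNarrow_univ [Fintype V] : IsNarrow f E s t x univ :=
  ⟨by simp [cutWeight_eq_zero_of_forall_mem], fun _ => mem_univ s, fun h => absurd (mem_univ _) h⟩

omit [DecidableEq V] in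
lemma IsFeasible.subset_or_subset (h : IsFeasible f E s t x) {A B : Finset V}
    (hA : IsNarrow f E s t x A) (hB : IsNarrow f E s t x B) : A ⊆ B ∨ B ⊆ A := by
  classical
  by_contra! hAB
  obtain ⟨a, haA, haB⟩ := not_subset.1 hAB.1
  obtain ⟨b, hbB, hbA⟩ := not_subset.1 hAB.2
  have hsA := hA.source_mem ⟨a, haA⟩
  have hsB := hB.source_mem ⟨b, hbB⟩
  have htA := hA.target_notMem hbA
  have htB := hB.target_notMem haB
  have hAB := h.two_le (S := A \ B) (v := s) ⟨a, by simp [*]⟩ (by simp [*]) (by simp [*])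
  have hBA := h.two_le (S := B \ A) (v := s) ⟨b, by simp [*]⟩ (by simp [*]) (by simp [*])
  linarith [cutWeight_sdiff_add_cutWeight_sdiff_le h.nonneg A B (f := f), hA.cutWeight_lt,
    hB.cutWeight_lt]

lemma IsFeasible.exists_edge_between (h : IsFeasible f E s t x) {A R B : Finset V}
    (hA : IsNarrow f E s t x A) (hB : IsNarrow f E s t x B) (hAR : A ⊂ R) (hRB : R ⊂ B) :
    ∃ i ∈ E, ∃ u ∈ R \ A, ∃ v ∈ B \ R, f i = s(u, v) := by
  by_contra! hE
  have hle := cutWeight_sdiff_add_cutWeight_sdiff_le_of_subset h.nonneg hAR.1 hRB.1 hE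
  obtain ⟨a, haR, haA⟩ := exists_of_ssubset hAR
  obtain ⟨b, hbB, hbR⟩ := exists_of_ssubset hRB
  have hRA : (R \ A).Nonempty := ⟨a, by simp [*]⟩
  have hBR : (B \ R).Nonempty := ⟨b, by simp [*]⟩
  have hb : b ∉ R \ A := by simp [*]
  have ha : a ∉ B \ R := by simp [*]
  by_cases htrivial : A.Nonempty ∧ ∃ z, z ∉ B
  · obtain ⟨hAne, z, hz⟩ := htrivial
    have hsA := hA.source_mem hAne
    have hsR := hAR.1 hsA
    have htB := hB.target_notMem hz
    have htR : t ∉ R := mt (@hRB.1 t) htB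
    linarith [hA.cutWeight_lt, hB.cutWeight_lt, h.two_le hRA hb (by simp [*]),
      h.two_le hBR ha (by simp [*])]
  · have hlt : cutWeight f E x A + cutWeight f E x B < 2 := by
      rw [not_and_or, not_nonempty_iff_eq_empty, not_exists_not] at htrivial
      rcases htrivial with rfl | hB
      · simpa using hB.cutWeight_lt
      · simpa [cutWeight_eq_zero_of_forall_mem hB] using hA.cutWeight_lt
    linarith [h.one_le hRA hb, h.one_le hBR ha]

omit [DecidableEq V] in
theorem IsFeasible.exists_isGaoTree [Fintype V] (h : IsFeasible f E s t x) :
    ∃ F, IsGaoTree f E {S | IsNarrow f E s t x S} s univ F := by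
  classical
  refine exists_isGaoTree_univ (fun S hS => hS.source_mem) fun R hR hR' _ => ?_
  obtain ⟨A, ⟨hA, hAR⟩, hAmax⟩ := exists_maximal_of_wellFoundedGT
    (fun A => IsNarrow f E s t x A ∧ A ⊂ R) ⟨∅, isNarrow_empty, empty_ssubset.2 hR⟩
  obtain ⟨B, ⟨hB, hRB⟩, hBmin⟩ := exists_minimal_of_wellFoundedLT
    (fun B => IsNarrow f E s t x B ∧ R ⊂ B) ⟨univ, isNarrow_univ, ssubset_univ_iff.2 hR'⟩
  obtain ⟨i, hi, u, hu, v, hv, huv⟩ := h.exists_edge_between hA hB hAR hRB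
  rw [mem_sdiff] at hu hv
  refine ⟨i, hi, u, hu.1, v, hv.2, huv, fun S hS hSR huS => hu.2 ?_, fun S hS hRS => ?_⟩
  · exact (h.subset_or_subset hS hA).elim id (hAmax ⟨hS, hSR⟩) huS
  · exact (h.subset_or_subset hB hS).elim id (hBmin ⟨hS, hRS⟩) hv.1

lemma IsFeasible.two_le_cutWeight_of_odd [Fintype V] (h : IsFeasible f E s t x)
    (hF : IsGaoTree f E {S | IsNarrow f E s t x S} s univ F) {S : Finset V}
    (hS : ∑ v ∈ S, (boundary f F + endpointSum s(s, t)) v = 1) : 2 ≤ cutWeight f E x S := by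
  simp only [Pi.add_apply, sum_add_distrib, sum_boundary, sum_endpointSum] at hS
  obtain ⟨e, u, v, -, hu, hv⟩ : ∃ e, Crosses S e := by
    by_contra! hcross
    simp [hcross] at hS
  by_contra! hlt
  have hst : ¬(s ∈ S ↔ t ∈ S) := fun hst => hlt.not_ge (h.two_le ⟨u, hu⟩ hv hst)
  have hone : #{i ∈ F | Crosses S (f i)} = 1 := by
    by_cases hs : s ∈ S
    · have ht : t ∉ S := by tauto
      exact hF.card_crossing S ⟨hlt, fun _ => hs, fun _ => ht⟩ ⟨u, hu⟩
        (ssubset_univ_iff.2 fun hS => hv (hS ▸ mem_univ v))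
    · have ht : t ∈ S := by tauto
      simpa only [crosses_compl] using hF.card_crossing Sᶜ
        ⟨by rwa [cutWeight_compl], fun _ => mem_compl.2 hs, fun _ => by simpa using ht⟩
        ⟨v, mem_compl.2 hv⟩ (ssubset_univ_iff.2 fun hS => mem_compl.1 (hS.symm ▸ mem_univ u) hu)
  rw [hone, if_pos (crosses_mk.2 hst)] at hS
  exact absurd hS (by decide)

lemma exists_boundary_eq_of_reachable {u v : V}
    (huv : (fromEdgeSet (f '' F)).Reachable u v) :
    ∃ J ⊆ F, boundary f J = endpointSum s(u, v) := by
  classical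
  obtain ⟨w⟩ := huv
  induction w with
  | nil => exact ⟨∅, empty_subset F, by rw [boundary_empty, endpointSum_diag]⟩
  | cons hadj _ ih =>
    obtain ⟨J, hJ, hJv⟩ := ih
    obtain ⟨⟨i, hi, hiuv⟩, -⟩ := (fromEdgeSet_adj _).1 hadj
    exact ⟨{i} ∆ J, symmDiff_subset (singleton_subset_iff.2 hi) hJ, by
      rw [boundary_symmDiff, boundary_singleton, hiuv, hJv, endpointSum_add_endpointSum]⟩

omit [DecidableEq V] in
lemma sum_cutWeight_singleton_le [Fintype V] (hx : ∀ i ∈ E, 0 ≤ x i) :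
    ∑ v, cutWeight f E x {v} ≤ 2 * ∑ i ∈ E, x i := by
  classical
  simp only [cutWeight, sum_filter]
  rw [sum_comm, mul_sum]
  refine sum_le_sum fun i hi => ?_
  have hi := hx i hi
  obtain ⟨⟨a, b⟩, hab : s(a, b) = f i⟩ := Sym2.mk_surjective (f i)
  calc ∑ v, (if Crosses {v} (f i) then x i else 0)
      ≤ ∑ v, ((if v = a then x i else 0) + if v = b then x i else 0) := by
        refine sum_le_sum fun v _ => ?_
        have hcross : Crosses {v} (f i) → v = a ∨ v = b := by
          rw [← hab, crosses_mk, mem_singleton, mem_singleton]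
          tauto
        split_ifs <;> first | linarith | tauto
    _ = 2 * x i := by simp [sum_add_distrib, two_mul]

omit [DecidableEq V] in
lemma IsFeasible.card_le [Fintype V] (h : IsFeasible f E s t x) :
    (Fintype.card V : ℝ) ≤ ∑ i ∈ E, x i + 1 := by
  classical
  rcases subsingleton_or_nontrivial V with hV | hV
  · have hcard : (Fintype.card V : ℝ) ≤ 1 := mod_cast Fintype.card_le_one_iff_subsingleton.2 hV
    linarith [sum_nonneg h.nonneg]
  have hdegree : ∀ v, 2 - (if v = s then 1 else 0) - (if v = t then 1 else 0) ≤
      cutWeight f E x {v} := by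
    intro v
    obtain ⟨w, hw⟩ := exists_ne v
    have hone := h.one_le (singleton_nonempty v) (notMem_singleton.2 hw)
    have htwo := h.two_le (singleton_nonempty v) (notMem_singleton.2 hw)
    simp only [mem_singleton, eq_comm (b := v)] at htwo
    split_ifs <;> first | linarith | linarith [htwo (by tauto)]
  have hsum := (sum_le_sum fun v _ => hdegree v).trans (sum_cutWeight_singleton_le h.nonneg)
  simp only [sum_sub_distrib, sum_const, sum_ite_eq', mem_univ, if_true, card_univ,
    nsmul_eq_mul] at hsum
  linarith

omit [DecidableEq V] in
theorem IsFeasible.exists_walk [Finite V] [Finite ι] (h : IsFeasible f E s t x)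
    {G : SimpleGraph V} (hE : ∀ i ∈ E, f i ∈ G.edgeSet) :
    ∃ w : G.Walk s t, (∀ u, u ∈ w.support) ∧ w.length ≤ 3 / 2 * ∑ i ∈ E, x i := by
  classical
  have := Fintype.ofFinite V
  obtain ⟨F, hF⟩ := h.exists_isGaoTree
  obtain ⟨P, hPF, hP⟩ := exists_boundary_eq_of_reachable (hF.reachable t (mem_univ t))
  obtain ⟨J, hJE, hJ, hJcard⟩ := exists_join_card_le h.nonneg
    ⟨F ∆ P, symmDiff_subset hF.subset (hPF.trans hF.subset), by rw [boundary_symmDiff, hP]⟩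
    fun S hS => h.two_le_cutWeight_of_odd hF hS
  have hboundary : boundary (Sum.elim f f) (F.disjSum J) = endpointSum s(s, t) := by
    rw [boundary, sum_disjSum]
    change boundary f F + boundary f J = _
    rw [hJ, ← add_assoc, ZModModule.add_self, zero_add]
  obtain ⟨w, hw, hsupport⟩ := exists_walk_of_boundary_eq (G := G) (F := F.disjSum J)
    (f := Sum.elim f f) (by
      rintro (i | i) hi
      · exact hE i (hF.subset (inl_mem_disjSum.1 hi))
      · exact hE i (hJE (inr_mem_disjSum.1 hi))) hboundary
  refine ⟨w, fun u => hsupport u ((hF.reachable u (mem_univ u)).mono (fromEdgeSet_mono ?_)), ?_⟩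
  · rintro _ ⟨i, hi, rfl⟩
    exact ⟨Sum.inl i, mem_coe.2 (inl_mem_disjSum.2 hi), rfl⟩
  · have hFcard : (#F + 1 : ℝ) = Fintype.card V := mod_cast hF.card_add_one
    have hwcard : (w.length : ℝ) ≤ #F + #J := mod_cast card_disjSum F J ▸ hw
    linarith [h.card_le]

end Relaxation

section SimpleGraphRelaxation

variable {V : Type*} {G : SimpleGraph V} {s t : V} {x : Sym2 V → ℝ}

lemma hkValue_eq_sum [Fintype G.edgeSet] : hkValue G x = ∑ e ∈ G.edgeFinset, x e := by
  rw [hkValue, ← coe_edgeFinset, finsum_mem_coe_finset]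

lemma hkCut_coe [Fintype G.edgeSet] (S : Finset V) :
    hkCut G x S = cutWeight id G.edgeFinset x S := by
  rw [cutWeight, ← finsum_mem_coe_finset, hkCut]
  congr! 3
  rw [coe_filter]
  simp only [mem_edgeFinset, Crosses, id_eq, mem_coe]

lemma isFeasible_of_hkPathFeasible [Fintype G.edgeSet] (h : HKPathFeasible G s t x) :
    IsFeasible id G.edgeFinset s t x := by
  have hcut : ∀ {S : Finset V} {v : V}, S.Nonempty → v ∉ S →
      ((s ∈ S ↔ t ∈ S) → 2 ≤ cutWeight id G.edgeFinset x S) ∧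
        (¬(s ∈ S ↔ t ∈ S) → 1 ≤ cutWeight id G.edgeFinset x S) := by
    intro S v hS hv
    simpa only [hkCut_coe, mem_coe] using
      h.2 S (coe_nonempty.2 hS) ((Set.ne_univ_iff_exists_notMem _).2 ⟨v, hv⟩)
  refine ⟨fun e _ => h.1 e, fun {S v} hS hv => ?_, fun hS hv => (hcut hS hv).1⟩
  by_cases hst : s ∈ S ↔ t ∈ S
  · exact one_le_two.trans ((hcut hS hv).1 hst)
  · exact (hcut hS hv).2 hst

lemma hkPathFeasible_two [Finite V] (hG : G.Connected) (s t : V) :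
    HKPathFeasible G s t fun _ => 2 := by
  classical
  have := Fintype.ofFinite V
  refine ⟨fun _ => zero_le_two, fun S ⟨u, hu⟩ hS => ?_⟩
  obtain ⟨v, hv⟩ := (Set.ne_univ_iff_exists_notMem S).1 hS
  obtain ⟨w⟩ := hG.preconnected u v
  obtain ⟨d, -, hd₁, hd₂⟩ := w.exists_boundary_dart S hu hv
  lift S to Finset V using S.toFinite
  have htwo : 2 ≤ hkCut G (fun _ => 2) S := by
    rw [hkCut_coe]
    exact single_le_sum (f := fun _ => (2 : ℝ)) (fun _ _ => zero_le_two)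
      (mem_filter.2 ⟨mem_edgeFinset.2 d.edge_mem, d.fst, d.snd, rfl, hd₁, hd₂⟩)
  exact ⟨fun _ => htwo, fun _ => one_le_two.trans htwo⟩

lemma exists_walk_of_hkPathFeasible [Finite V] (h : HKPathFeasible G s t x) :
    ∃ w : G.Walk s t, (∀ u, u ∈ w.support) ∧ w.length ≤ 3 / 2 * hkValue G x := by
  classical
  have := Fintype.ofFinite V
  rw [hkValue_eq_sum]
  exact (isFeasible_of_hkPathFeasible h).exists_walk fun _ => mem_edgeFinset.1

end SimpleGraphRelaxation

end HeldKarp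

theorem spanning_path_walk_le_heldKarpPath_general {V : Type*} [Fintype V] (G : SimpleGraph V)
    (hG : G.Connected) (s t : V) :
    ∃ w : G.Walk s t, (∀ u, u ∈ w.support) ∧ w.length ≤ 3 / 2 * OLPpath G s t := by
  have htwo := HeldKarp.hkPathFeasible_two hG s t
  have hwalk := HeldKarp.exists_walk_of_hkPathFeasible htwo
  obtain ⟨w, hw, hmin⟩ := exists_minimalFor_of_wellFoundedLT
    (fun w : G.Walk s t => ∀ u, u ∈ w.support) Walk.length (hwalk.imp fun _ => And.left)
  refine ⟨w, hw, ?_⟩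
  have hle : 2 / 3 * (w.length : ℝ) ≤ OLPpath G s t := by
    refine le_csInf ⟨_, _, htwo, rfl⟩ ?_
    rintro _ ⟨x, hx, rfl⟩
    obtain ⟨w', hw', hlength⟩ := HeldKarp.exists_walk_of_hkPathFeasible hx
    have hshort : (w.length : ℝ) ≤ w'.length :=
      mod_cast (le_total w.length w'.length).elim id (hmin hw')
    linarith
  linarith

/-- For every `ε > 0` there is an `N` such that every connected
simple graph on at least `N` vertices admits, for all vertices `s, t`, a spanning
walk from `s` to `t` of length at most `(3 − √2 + ε) · OLP(G, s, t)`. -/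
theorem spanning_path_walk_le_heldKarpPath :
    ∀ ε : ℝ, 0 < ε → ∃ N : ℕ,
      ∀ (V : Type) [Fintype V] (G : SimpleGraph V),
        N ≤ Fintype.card V → G.Connected → ∀ s t : V,
          ∃ w : G.Walk s t, (∀ u : V, u ∈ w.support) ∧
            (w.length : ℝ) ≤ (3 - Real.sqrt 2 + ε) * OLPpath G s t := by
  intro ε hε
  refine ⟨0, fun V _ G _ hG s t => ?_⟩
  obtain ⟨w, hw, hlength⟩ := spanning_path_walk_le_heldKarpPath_general G hG s t
  have hOLP : 0 ≤ OLPpath G s t := by linarith [w.length.cast_nonneg (α := ℝ)]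
  have hsqrt : Real.sqrt 2 ≤ 3 / 2 := (Real.sqrt_le_left (by norm_num)).2 (by norm_num)
  exact ⟨w, hw, hlength.trans (mul_le_mul_of_nonneg_right (by linarith) hOLP)⟩
end
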